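/- arXiv:1605.02469 — 12 statements merged into one kernel-verified Lean document; each statement's English description precedes it below -/
import Mathlib

section
/- Let s ≥ 1 and let A be the s×s matrix over ℂ with A_{xy} = 1 if x > y and A_{xy} = 0 otherwise (the adjacency matrix of the transitive tournament on s vertices). Then the eigenvalues of the Hermitian matrix S = i(A − Aᵀ) are exactly the numbers cot((2i−1)π/(2s)) for i = 1, 2, …, s. -/
open Matrix Finset

/-- The Seidel matrix `S = i (A - Aᵀ)` of a digraph with adjacency matrix `A`. -/
def Seidel {v : ℕ} (A : Matrix (Fin v) (Fin v) ℂ) : Matrix (Fin v) (Fin v) ℂ :=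
  Complex.I • (A - Aᵀ)

lemma tt_sum (w : ℂ) (x n : ℕ) (h : x + 1 ≤ n) :
    (w - 1) * ∑ y ∈ Finset.range n,
      ((if y < x then (1:ℂ) else 0) - (if x < y then 1 else 0)) * w ^ y
      = w ^ x + w ^ (x + 1) - 1 - w ^ n := by
  induction n, h using Nat.le_induction with
  | base =>
    rw [Finset.sum_range_succ]
    have : ∑ y ∈ Finset.range x,
        ((if y < x then (1:ℂ) else 0) - (if x < y then 1 else 0)) * w ^ y
        = ∑ y ∈ Finset.range x, w ^ y := by
      apply Finset.sum_congr rfl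
      intro y hy
      have hy' := Finset.mem_range.mp hy
      simp [hy', hy'.not_gt]
    rw [this]
    have := mul_geom_sum w x
    simp only [lt_self_iff_false, if_false, sub_self, zero_mul, add_zero, this]
    ring
  | succ n hn ih =>
    rw [Finset.sum_range_succ, mul_add, ih]
    have h1 : ¬ n < x := by omega
    have h2 : x < n := by omega
    simp only [h1, h2, if_true, if_false]
    ring

lemma tt_mem_spectrum (s : ℕ) (hs : 1 ≤ s) (A : Matrix (Fin s) (Fin s) ℂ)
    (hA : ∀ x y : Fin s, A x y = if (y : ℕ) < (x : ℕ) then 1 else 0)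
    (w : ℂ) (c : ℝ) (hw : w ≠ 1) (hws : w ^ s = -1)
    (hc : Complex.I * (w + 1) = c * (w - 1)) : c ∈ spectrum ℝ (Seidel A) := by
  rw [← spectrum.algebraMap_mem_iff ℂ, ← Matrix.spectrum_toLin',
    ← Module.End.hasEigenvalue_iff_mem_spectrum]
  apply Module.End.hasEigenvalue_of_hasEigenvector (x := fun y : Fin s => w ^ (y : ℕ))
  refine ⟨?_, ?_⟩
  · rw [Module.End.mem_eigenspace_iff]
    ext x
    have key := tt_sum w x s x.2
    rw [Finset.sum_range, hws] at key
    have hw' : w - 1 ≠ 0 := sub_ne_zero.mpr hw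
    have e : (Matrix.toLin' (Seidel A)) (fun y : Fin s => w ^ (y : ℕ)) x
        = Complex.I * ∑ y : Fin s, ((if (y:ℕ) < x then (1:ℂ) else 0)
          - (if (x:ℕ) < y then 1 else 0)) * w ^ (y:ℕ) := by
      simp only [Matrix.toLin'_apply, Matrix.mulVec, dotProduct, Seidel, Matrix.smul_apply,
        Matrix.sub_apply, Matrix.transpose_apply, hA, Finset.mul_sum, smul_eq_mul, mul_assoc]
    rw [e]
    apply mul_left_cancel₀ hw'
    simp only [Pi.smul_apply, smul_eq_mul, Complex.coe_algebraMap]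
    linear_combination Complex.I * key + w ^ (x:ℕ) * hc
  · intro h
    have := congrFun h ⟨0, hs⟩
    simp at this

/-- The eigenvalues of the Seidel matrix of the transitive tournament on `s ≥ 1` vertices
are exactly `cot((2i-1)π/(2s))`, `i = 1, …, s`. -/
theorem seidel_eigenvalues_transitive_tournament
    (s : ℕ) (hs : 1 ≤ s)
    (A : Matrix (Fin s) (Fin s) ℂ)
    (hA : ∀ x y : Fin s, A x y = if (y : ℕ) < (x : ℕ) then 1 else 0)
    (hH : (Seidel A).IsHermitian) :
    ∃ σ : Equiv.Perm (Fin s), ∀ i : Fin s,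
      hH.eigenvalues (σ i) =
        Real.cot ((2 * ((i : ℕ) : ℝ) + 1) * Real.pi / (2 * (s : ℝ))) := by
  have hs0 : (0:ℝ) < s := by exact_mod_cast hs
  have hpi := Real.pi_pos
  set θ : Fin s → ℝ := fun i => (2 * ((i : ℕ) : ℝ) + 1) * Real.pi / (2 * (s : ℝ)) with hθ
  have hpos : ∀ i, 0 < θ i := fun i => by simp only [hθ]; positivity
  have hlt : ∀ i, θ i < Real.pi := fun i => by
    simp only [hθ]
    rw [div_lt_iff₀ (by positivity)]
    have : ((i : ℕ) : ℝ) + 1 ≤ s := by exact_mod_cast i.2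
    nlinarith
  have hsin : ∀ i, 0 < Real.sin (θ i) := fun i => Real.sin_pos_of_pos_of_lt_pi (hpos i) (hlt i)
  have hinj : Function.Injective fun i => Real.cot (θ i) := by
    intro i j hij
    simp only [Real.cot_eq_cos_div_sin] at hij
    rw [div_eq_div_iff (hsin i).ne' (hsin j).ne'] at hij
    have h0 : Real.sin (θ i - θ j) = 0 := by rw [Real.sin_sub]; linarith
    rw [Real.sin_eq_zero_iff_of_lt_of_lt (by linarith [hpos i, hlt j])
      (by linarith [hpos j, hlt i])] at h0
    have h1 : θ i = θ j := by linarith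
    simp only [hθ] at h1
    field_simp at h1
    have h2 : ((i:ℕ):ℝ) = (j:ℕ) := by linarith
    exact Fin.ext (by exact_mod_cast h2)
  have hmem : ∀ i, ∃ k, hH.eigenvalues k = Real.cot (θ i) := by
    intro i
    have := tt_mem_spectrum s hs A hA (Complex.exp (θ i * Complex.I) ^ 2) (Real.cot (θ i))
    rw [hH.spectrum_real_eq_range_eigenvalues] at this
    have hsc : (Complex.sin (θ i)) ≠ 0 := by
      rw [← Complex.ofReal_sin]; exact_mod_cast (hsin i).ne'
    have hE := Complex.exp_mul_I (θ i)
    have hne : Complex.exp (θ i * Complex.I) ≠ 0 := Complex.exp_ne_zero _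
    have hsq := Complex.sin_sq_add_cos_sq (θ i)
    have hI := Complex.I_sq
    have hm : Complex.exp (θ i * Complex.I) ^ 2 - 1
        = 2 * Complex.I * Complex.sin (θ i) * Complex.exp (θ i * Complex.I) := by
      rw [hE]
      linear_combination hsq - Complex.sin (θ i) ^ 2 * hI
    have hp : Complex.exp (θ i * Complex.I) ^ 2 + 1
        = 2 * Complex.cos (θ i) * Complex.exp (θ i * Complex.I) := by
      rw [hE]
      linear_combination -hsq + Complex.sin (θ i) ^ 2 * hI
    apply this
    · intro h
      rw [h, sub_self] at hm
      have := mul_ne_zero (mul_ne_zero (mul_ne_zero two_ne_zero Complex.I_ne_zero) hsc) hne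
      exact this hm.symm
    · rw [← pow_mul, ← Complex.exp_nat_mul]
      have : ((2 * s : ℕ) : ℂ) * (θ i * Complex.I)
          = Real.pi * Complex.I + (i : ℕ) * (2 * Real.pi * Complex.I) := by
        have hs' : (s:ℂ) ≠ 0 := by exact_mod_cast hs0.ne'
        simp only [hθ]
        push_cast
        field_simp
        ring
      rw [this, Complex.exp_add, Complex.exp_pi_mul_I, Complex.exp_nat_mul_two_pi_mul_I]
      simp
    · rw [hm, hp, Complex.ofReal_cot, Complex.cot_eq_cos_div_sin]
      field_simp
  choose g hg using hmem
  have hginj : Function.Injective g := by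
    intro i j hij
    apply hinj
    simp only
    rw [← hg i, ← hg j, hij]
  exact ⟨Equiv.ofBijective g (Finite.injective_iff_bijective.mp hginj), fun i => hg i⟩
end

section
/- Let G be a digraph on v vertices containing a transitive subtournament of size s, and let θ_1 ≥ θ_2 ≥ … ≥ θ_v be the eigenvalues of the Seidel matrix S_G listed in decreasing order. Then for every i with 1 ≤ i ≤ ⌊s/2⌋, one has 2·s·arccot(θ_i) ≤ (2i−1)·π, i.e., s ≤ (2i−1)π/(2 arccot(θ_i)). -/
open Matrix Finset

/-- A digraph on `v` vertices, given by its adjacency matrix: entries in `{0,1}`, zero diagonal. -/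
def IsDigraph {v : ℕ} (A : Matrix (Fin v) (Fin v) ℂ) : Prop :=
  (∀ x y, A x y = 0 ∨ A x y = 1) ∧ ∀ x, A x x = 0

/-- `T` is a transitive subtournament of the digraph with adjacency matrix `A`. -/
def IsTransSubtournament {v : ℕ} (A : Matrix (Fin v) (Fin v) ℂ) (T : Finset (Fin v)) : Prop :=
  (∀ x ∈ T, ∀ y ∈ T, x ≠ y → Xor' (A x y = 1) (A y x = 1)) ∧
  (∀ x ∈ T, ∀ y ∈ T, ∀ z ∈ T, A x y = 1 → A y z = 1 → A x z = 1)

/-- The inverse cotangent, with values in `(0, π)`. -/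
noncomputable def arccot (x : ℝ) : ℝ := Real.pi / 2 - Real.arctan x

lemma geo_aux (w : ℂ) (j n : ℕ) (h : j + 1 ≤ n) :
    (∑ k ∈ Finset.range n, (if j < k then (1:ℂ) else if k < j then -1 else 0) * w ^ k) * (1 - w)
      = w ^ (j+1) - w ^ n - 1 + w ^ j := by
  induction n, h using Nat.le_induction with
  | base =>
    rw [Finset.sum_range_succ]
    have : ∑ k ∈ Finset.range j, (if j < k then (1:ℂ) else if k < j then -1 else 0) * w ^ k
        = - ∑ k ∈ Finset.range j, w ^ k := by
      rw [← Finset.sum_neg_distrib]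
      refine Finset.sum_congr rfl fun k hk => ?_
      have hk := Finset.mem_range.1 hk
      rw [if_neg (by omega), if_pos hk]; ring
    rw [this]
    have := geom_sum_mul w j
    simp only [lt_irrefl, if_false]
    linear_combination this
  | succ n hn ih =>
    rw [Finset.sum_range_succ, add_mul, ih, if_pos (by omega)]
    ring

lemma interlace_aux {v k : ℕ} (S : Matrix (Fin v) (Fin v) ℂ) (hH : S.IsHermitian)
    (θ : Fin v → ℝ) (hdec : ∀ i j : Fin v, i ≤ j → θ j ≤ θ i)
    (σ : Equiv.Perm (Fin v)) (hσ : ∀ i, θ i = hH.eigenvalues (σ i))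
    (i : Fin v) (hk : (i : ℕ) < k) (M : Matrix (Fin v) (Fin k) ℂ) (r : ℝ) (hr : 0 < r)
    (μ : Fin k → ℝ) (t : ℝ) (ht : ∀ m, t ≤ μ m)
    (h1 : Mᴴ * M = diagonal (fun _ => (r : ℂ)))
    (h2 : Mᴴ * S * M = diagonal (fun m => ((r * μ m : ℝ) : ℂ))) : t ≤ θ i := by
  set U : Matrix (Fin v) (Fin v) ℂ := (hH.eigenvectorUnitary : Matrix (Fin v) (Fin v) ℂ) with hU
  have hUU : U * Uᴴ = 1 := by
    have := Unitary.mul_star_self_of_mem hH.eigenvectorUnitary.2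
    simpa [star_eq_conjTranspose] using this
  have hS : S = U * diagonal (fun a => (hH.eigenvalues a : ℂ)) * Uᴴ := by
    have := hH.spectral_theorem
    rw [Unitary.conjStarAlgAut_apply] at this
    simpa [star_eq_conjTranspose, Function.comp_def] using this
  set N := Uᴴ * M with hN
  have e1 : Nᴴ * N = diagonal (fun _ => (r : ℂ)) := by
    rw [← h1, hN, conjTranspose_mul, conjTranspose_conjTranspose]
    calc Mᴴ * U * (Uᴴ * M) = Mᴴ * (U * Uᴴ) * M := by simp only [Matrix.mul_assoc]
      _ = _ := by rw [hUU, Matrix.mul_one]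
  have e2 : Nᴴ * (diagonal (fun a => (hH.eigenvalues a : ℂ)) * N)
      = diagonal (fun m => ((r * μ m : ℝ) : ℂ)) := by
    rw [← h2, hN, conjTranspose_mul, conjTranspose_conjTranspose]
    conv_rhs => rw [hS]
    simp only [Matrix.mul_assoc]
  -- find the coefficient vector
  let L : (Fin k → ℂ) →ₗ[ℂ] (Fin (i : ℕ) → ℂ) :=
    (LinearMap.funLeft ℂ ℂ (fun j : Fin (i : ℕ) => σ ⟨j, j.2.trans i.2⟩)) ∘ₗ N.mulVecLin
  obtain ⟨c, hc, hc0⟩ : ∃ c, L c = 0 ∧ c ≠ 0 := by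
    have : LinearMap.ker L ≠ ⊥ := LinearMap.ker_ne_bot_of_finrank_lt (by simpa using hk)
    obtain ⟨c, hc, h0⟩ := (Submodule.ne_bot_iff _).1 this
    exact ⟨c, hc, h0⟩
  set z := N *ᵥ c with hz
  have hz0 : ∀ j : Fin v, j < i → z (σ j) = 0 := fun j hj => congrFun hc ⟨j, hj⟩
  have q1 : star z ⬝ᵥ z = star c ⬝ᵥ (diagonal (fun _ => (r : ℂ)) *ᵥ c) := by
    rw [← e1, ← mulVec_mulVec, hz, star_mulVec, dotProduct_mulVec, dotProduct_mulVec]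
    simp [vecMul_vecMul, dotProduct_mulVec]
  have q2 : star z ⬝ᵥ (diagonal (fun a => (hH.eigenvalues a : ℂ)) *ᵥ z)
      = star c ⬝ᵥ (diagonal (fun m => ((r * μ m : ℝ) : ℂ)) *ᵥ c) := by
    rw [← e2, ← mulVec_mulVec, ← mulVec_mulVec, hz, star_mulVec, ← dotProduct_mulVec]
  have key : ∀ {n : ℕ} (d : Fin n → ℝ) (x : Fin n → ℂ),
      star x ⬝ᵥ (diagonal (fun a => (d a : ℂ)) *ᵥ x) = ((∑ a, d a * Complex.normSq (x a) : ℝ) : ℂ) := by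
    intro n d x
    simp only [dotProduct, mulVec_diagonal, Complex.ofReal_sum, Complex.ofReal_mul,
      Complex.normSq_eq_conj_mul_self, Pi.star_apply, RCLike.star_def]
    exact Finset.sum_congr rfl fun a _ => by ring
  have key1 := key (fun _ => (1:ℝ)) z
  rw [key, key (fun m => r * μ m)] at q2
  rw [key (fun _ => r)] at q1
  simp only [Complex.ofReal_one, diagonal_one, one_mulVec] at key1
  rw [q1] at key1
  have k1 := Complex.ofReal_injective key1
  have k2 := Complex.ofReal_injective q2
  have hpos : 0 < ∑ m, r * Complex.normSq (c m) := by
    obtain ⟨m, hm⟩ := Function.ne_iff.1 hc0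
    refine Finset.sum_pos' (fun m _ => mul_nonneg hr.le (Complex.normSq_nonneg _)) ⟨m, mem_univ _, ?_⟩
    exact mul_pos hr (Complex.normSq_pos.2 hm)
  have b1 : t * ∑ m, r * Complex.normSq (c m) ≤ ∑ m, r * μ m * Complex.normSq (c m) := by
    rw [Finset.mul_sum]
    refine Finset.sum_le_sum fun m _ => ?_
    have := mul_le_mul_of_nonneg_right (ht m) (mul_nonneg hr.le (Complex.normSq_nonneg (c m)))
    linarith
  have b2 : ∑ a, hH.eigenvalues a * Complex.normSq (z a) ≤ θ i * ∑ a, 1 * Complex.normSq (z a) := by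
    rw [Finset.mul_sum]
    refine Finset.sum_le_sum fun a _ => ?_
    obtain ⟨j, rfl⟩ := σ.surjective a
    rw [← hσ, one_mul]
    rcases lt_or_ge j i with h | h
    · simp [hz0 j h]
    · exact mul_le_mul_of_nonneg_right (hdec i j h) (Complex.normSq_nonneg _)
  rw [k2, ← k1] at b2
  exact le_of_mul_le_mul_right (b1.trans b2) hpos

lemma sto_aux {α : Type} [Fintype α] {s : ℕ} (r : α → α → Prop) (hirr : ∀ x, ¬ r x x)
    (htri : ∀ a b, ¬ r a b → ¬ r b a → a = b) (htr : ∀ a b c, r a b → r b c → r a c)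
    (hc : Fintype.card α = s) :
    ∃ e : Fin s → α, Function.Injective e ∧ ∀ j k, j < k → r (e j) (e k) := by
  classical
  have : IsStrictTotalOrder α r :=
    { irrefl := hirr, trans := htr, trichotomous := htri }
  let _ : LinearOrder α := linearOrderOfSTO r
  let e := Fintype.orderIsoFinOfCardEq α hc
  exact ⟨e, e.injective, fun j k hjk => e.strictMono hjk⟩

lemma order_aux {v s : ℕ} (A : Matrix (Fin v) (Fin v) ℂ) (hA : IsDigraph A)
    (T : Finset (Fin v)) (hT : IsTransSubtournament A T) (hTcard : T.card = s) :
    ∃ f : Fin s → Fin v, Function.Injective f ∧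
      ∀ j k, j < k → A (f j) (f k) = 1 ∧ A (f k) (f j) = 0 := by
  classical
  obtain ⟨h1, h2⟩ := hT
  let r : T → T → Prop := fun x y => A x y = 1
  have hirr : ∀ x : T, ¬ r x x := fun x h => by
    simp only [r, hA.2] at h; exact zero_ne_one h
  have htri : ∀ a b : T, ¬ r a b → ¬ r b a → a = b := fun a b hab hba => by
    by_contra hne
    rcases h1 a a.2 b b.2 (fun h => hne (Subtype.ext h)) with h | h
    · exact hab h.1
    · exact hba h.1
  have htr : ∀ a b c : T, r a b → r b c → r a c := fun a b c => h2 a a.2 b b.2 c c.2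
  obtain ⟨e, he, her⟩ := sto_aux (s := s) r hirr htri htr (by rw [Fintype.card_coe]; exact hTcard)
  refine ⟨fun j => (e j : Fin v), fun a b h => he (Subtype.ext h), fun j k hjk => ?_⟩
  have hr : r (e j) (e k) := her j k hjk
  refine ⟨hr, ?_⟩
  rcases hA.1 (e k) (e j) with h | h
  · exact h
  · exact absurd (htr _ _ _ hr h) (hirr _)

/-- If a digraph on `v` vertices contains a transitive subtournament of size `s`, and
`θ 0 ≥ θ 1 ≥ ⋯ ≥ θ (v-1)` are the eigenvalues of its Seidel matrix in decreasing order,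
then `2 s arccot(θ_i) ≤ (2i-1) π` for `1 ≤ i ≤ ⌊s/2⌋` (here the eigenvalue `θ_i` of the
statement is `θ (i-1)`). -/
theorem interlacing_bound_transitive_subtournament
    {v s : ℕ} (A : Matrix (Fin v) (Fin v) ℂ) (hA : IsDigraph A)
    (hH : (Seidel A).IsHermitian)
    (T : Finset (Fin v)) (hT : IsTransSubtournament A T) (hTcard : T.card = s)
    (θ : Fin v → ℝ)
    (hdec : ∀ i j : Fin v, i ≤ j → θ j ≤ θ i)
    (hperm : ∃ σ : Equiv.Perm (Fin v), ∀ i, θ i = hH.eigenvalues (σ i)) :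
    ∀ i : Fin v, (i : ℕ) + 1 ≤ s / 2 →
      2 * (s : ℝ) * arccot (θ i) ≤ (2 * ((i : ℕ) : ℝ) + 1) * Real.pi := by
  intro i hi
  obtain ⟨σ, hσ⟩ := hperm
  obtain ⟨f, hf, hfA⟩ := order_aux A hA T hT hTcard
  have hs2 : 2 * (i : ℕ) + 2 ≤ s := by omega
  have hs : 0 < s := by omega
  have hsR : (0:ℝ) < s := by exact_mod_cast hs
  have hsC : (s:ℂ) ≠ 0 := by exact_mod_cast hs.ne'
  have hpi := Real.pi_pos
  let a : ℕ → ℝ := fun m => (2 * (m:ℝ) + 1) * Real.pi / (2 * s)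
  have ha0 : ∀ m, 0 < a m := fun m => by positivity
  have ha1 : ∀ m, m ≤ (i : ℕ) → a m < Real.pi / 2 := fun m hm => by
    have : 2 * (m:ℝ) + 2 ≤ s := by exact_mod_cast (by omega : 2 * m + 2 ≤ s)
    simp only [a]
    rw [div_lt_div_iff₀ (by positivity) two_pos]
    nlinarith
  have hamono : ∀ m, m ≤ (i : ℕ) → a m ≤ a i := fun m hm => by
    have : (m:ℝ) ≤ (i:ℕ) := by exact_mod_cast hm
    simp only [a]
    gcongr
  let μ : ℕ → ℝ := fun m => Real.tan (Real.pi / 2 - a m)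
  let w : ℕ → ℂ := fun m => Complex.exp (-(2 * (a m : ℂ) * Complex.I))
  have hws : ∀ m, w m ^ s = -1 := fun m => by
    simp only [w, a]
    rw [← Complex.exp_nat_mul, Complex.exp_eq_exp_iff_exists_int (y := Real.pi * Complex.I) |>.2,
      Complex.exp_pi_mul_I]
    refine ⟨-(m:ℤ) - 1, ?_⟩
    push_cast
    field_simp
    ring
  have hw1 : ∀ m, w m ≠ 1 := fun m h => by
    have := hws m
    rw [h] at this; norm_num at this
  have hwstar : ∀ m, star (w m) * w m = 1 := fun m => by
    simp only [w, RCLike.star_def]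
    rw [← Complex.exp_conj, ← Complex.exp_add]
    rw [Complex.exp_eq_one_iff]
    exact ⟨0, by simp [Complex.conj_ofReal, map_ofNat]⟩
  have hwinj : ∀ m l, m ≤ (i:ℕ) → l ≤ (i:ℕ) → w m = w l → m = l := fun m l hm hl h => by
    simp only [w] at h
    obtain ⟨n, hn⟩ := Complex.exp_eq_exp_iff_exists_int.1 h
    have hn' : a l - a m = n * Real.pi := by
      have h3 : ((2 * Complex.I) * ((a l - a m : ℝ) : ℂ)) = (2 * Complex.I) * ((n * Real.pi : ℝ) : ℂ) := by
        push_cast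
        linear_combination hn
      have := mul_left_cancel₀ (by simp) h3
      exact_mod_cast this
    have b1 := ha0 m
    have b2 := ha0 l
    have b3 := ha1 m hm
    have b4 := ha1 l hl
    have n1 : (n:ℝ) < 1 := by nlinarith
    have n2 : (-1:ℝ) < n := by nlinarith
    have n1' : n < 1 := by exact_mod_cast n1
    have n2' : -1 < n := by exact_mod_cast n2
    have : n = 0 := by omega
    subst this
    simp only [a] at hn'
    field_simp at hn'
    have : (m:ℝ) = l := by
      have : Real.pi * ((m:ℝ) - l) = 0 := by push_cast at hn'; nlinarith
      rcases mul_eq_zero.1 this with h | h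
      · linarith
      · linarith
    exact_mod_cast this
  have hμ : ∀ m, m ≤ (i:ℕ) → (1 - w m) * (μ m : ℂ) = Complex.I * (1 + w m) := fun m hm => by
    have hsin : Real.sin (a m) ≠ 0 :=
      (Real.sin_pos_of_pos_of_lt_pi (ha0 m) (by linarith [ha1 m hm])).ne'
    have hm1 : (μ m : ℂ) * Complex.sin (a m) = Complex.cos (a m) := by
      have : μ m * Real.sin (a m) = Real.cos (a m) := by
        simp only [μ]
        rw [Real.tan_eq_sin_div_cos, Real.sin_pi_div_two_sub, Real.cos_pi_div_two_sub]
        field_simp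
      exact_mod_cast this
    have hwE : w m = (Complex.cos (a m) - Complex.sin (a m) * Complex.I) ^ 2 := by
      have : Complex.cos (a m) - Complex.sin (a m) * Complex.I = Complex.exp (-(a m : ℂ) * Complex.I) := by
        rw [Complex.exp_mul_I, Complex.cos_neg, Complex.sin_neg]; ring
      rw [this, ← Complex.exp_nat_mul]
      simp only [w]
      congr 1
      push_cast; ring
    rw [hwE]
    have hcs := Complex.sin_sq_add_cos_sq (a m : ℂ)
    generalize Complex.cos (a m) = C at *
    generalize Complex.sin (a m) = D at *
    generalize (μ m : ℂ) = u at *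
    have hI := Complex.I_sq
    have e1 : 1 - (C - D * Complex.I) ^ 2 = 2 * Complex.I * D * (C - D * Complex.I) := by
      linear_combination (-1 : ℂ) * hcs + (D ^ 2) * hI
    have e2 : 1 + (C - D * Complex.I) ^ 2 = 2 * C * (C - D * Complex.I) := by
      linear_combination (-1 : ℂ) * hcs + (D ^ 2) * hI
    rw [e1, e2]
    linear_combination (2 * Complex.I * (C - D * Complex.I)) * hm1
  obtain ⟨W, hW⟩ : ∃ W : Matrix (Fin s) (Fin (i + 1)) ℂ, ∀ j m, W j m = w m ^ (j : ℕ) :=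
    ⟨Matrix.of fun j m => w m ^ (j : ℕ), fun _ _ => rfl⟩
  obtain ⟨P, hP⟩ : ∃ P : Matrix (Fin v) (Fin s) ℂ, ∀ x j, P x j = if x = f j then 1 else 0 :=
    ⟨Matrix.of fun x j => if x = f j then 1 else 0, fun _ _ => rfl⟩
  have hPP : Pᴴ * P = 1 := by
    ext j k
    simp [hP, Matrix.mul_apply, conjTranspose_apply, Matrix.one_apply, hf.eq_iff, eq_comm]
  have hPSP : Pᴴ * Seidel A * P = (Seidel A).submatrix f f := by
    ext j k
    simp [hP, Matrix.mul_apply, conjTranspose_apply]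
  have hWW : Wᴴ * W = diagonal (fun _ => ((s:ℝ) : ℂ)) := by
    ext m l
    simp only [hW, Matrix.mul_apply, conjTranspose_apply, star_pow, ← mul_pow]
    rw [Fin.sum_univ_eq_sum_range (fun j => (star (w m) * w l) ^ j)]
    by_cases hml : m = l
    · subst hml
      simp only [hwstar]; simp
    · rw [diagonal_apply_ne _ hml]
      have hne : star (w m) * w l - 1 ≠ 0 := fun h => by
        apply hml
        have h' : w m = w l := by
          linear_combination (-w m) * h + w l * hwstar m
        exact Fin.ext (hwinj m l (by omega) (by omega) h')
      have := geom_sum_mul (star (w m) * w l) s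
      rw [mul_pow, ← star_pow, hws, hws] at this
      simp at this
      rcases this with h | h
      · exact h
      · exact absurd h hne
  have hBW : (Seidel A).submatrix f f * W = W * diagonal (fun m : Fin ((i:ℕ) + 1) => (μ m : ℂ)) := by
    ext j m
    rw [mul_diagonal, Matrix.mul_apply]
    have hent : ∀ k : Fin s, (Seidel A).submatrix f f j k =
        Complex.I * (if (j:ℕ) < k then (1:ℂ) else if (k:ℕ) < j then -1 else 0) := fun k => by
      simp only [submatrix_apply, Seidel, Matrix.smul_apply, Matrix.sub_apply, transpose_apply, smul_eq_mul]
      congr 1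
      rcases lt_trichotomy j k with h | h | h
      · rw [if_pos (by exact h), (hfA j k h).1, (hfA j k h).2]; ring
      · subst h; simp
      · rw [if_neg (by have : (k:ℕ) < j := h
                       omega), if_pos (by exact h), (hfA k j h).1, (hfA k j h).2]; ring
    simp only [hent, hW, mul_assoc]
    rw [← Finset.mul_sum, Fin.sum_univ_eq_sum_range
      (fun k => (if (j:ℕ) < k then (1:ℂ) else if (k:ℕ) < j then -1 else 0) * w m ^ k)]
    have g := geo_aux (w m) j s j.2
    rw [hws] at g
    have hne : 1 - w m ≠ 0 := sub_ne_zero.2 (hw1 m).symm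
    apply mul_right_cancel₀ hne
    rw [mul_assoc, g]
    have := hμ m (by omega)
    linear_combination (-w m ^ (j:ℕ)) * this
  have fin := interlace_aux (Seidel A) hH θ hdec σ hσ i (Nat.lt_succ_self i) (P * W) s hsR
    (fun m => μ m) (μ i) ?_ ?_ ?_
  · have h3 : Real.pi / 2 - a i ≤ Real.arctan (θ i) := by
      rw [← Real.arctan_tan (x := Real.pi / 2 - a i) (by linarith [ha1 i le_rfl]) (by linarith [ha0 i])]
      exact Real.arctan_strictMono.monotone fin
    have h4 : arccot (θ i) ≤ a i := by unfold arccot; linarith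
    calc 2 * (s:ℝ) * arccot (θ i) ≤ 2 * s * a i := by gcongr
      _ = _ := by simp only [a]; field_simp
  · intro m
    have hm : (m:ℕ) ≤ i := by omega
    refine Real.strictMonoOn_tan.monotoneOn ⟨?_, ?_⟩ ⟨?_, ?_⟩ ?_ <;>
      linarith [ha0 m, ha1 m hm, ha0 i, ha1 i le_rfl, hamono m hm]
  · rw [conjTranspose_mul, ← hWW]
    calc Wᴴ * Pᴴ * (P * W) = Wᴴ * (Pᴴ * P) * W := by simp only [Matrix.mul_assoc]
      _ = _ := by rw [hPP, Matrix.mul_one]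
  · rw [conjTranspose_mul]
    calc Wᴴ * Pᴴ * Seidel A * (P * W) = Wᴴ * ((Pᴴ * Seidel A * P) * W) := by
          simp only [Matrix.mul_assoc]
      _ = _ := by
          rw [hPSP, hBW, ← Matrix.mul_assoc, hWW, diagonal_mul_diagonal]
          simp
end

section
/- Let G be a doubly regular tournament on v vertices containing a transitive subtournament of size s. Then 2·s·arccot(√v) ≤ π, i.e., s ≤ π/(2 arccot(√v)). -/
open Matrix Finset

/-- A tournament: a digraph with `A + Aᵀ = J - I`. -/
def IsTournament {v : ℕ} (A : Matrix (Fin v) (Fin v) ℂ) : Prop :=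
  IsDigraph A ∧ A + Aᵀ = Matrix.of (fun _ _ => 1) - 1

/-- A doubly regular tournament: every vertex dominates exactly `(v-1)/2` vertices and every
pair of distinct vertices jointly dominates exactly `(v-3)/4` vertices (so `v ≡ 3 (mod 4)`). -/
def IsDRT {v : ℕ} (A : Matrix (Fin v) (Fin v) ℂ) : Prop :=
  IsTournament A ∧ v % 4 = 3 ∧
  (∀ x, (univ.filter fun y => A x y = 1).card = (v - 1) / 2) ∧
  (∀ x y, x ≠ y → (univ.filter fun z => A x z = 1 ∧ A y z = 1).card = (v - 3) / 4)

lemma aux_sum (ω : ℂ) (s k : ℕ) (hk : k < s) (hω : ω ^ s = -1) :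
    (1 - ω) * ∑ j ∈ range s, (if k < j then (1:ℂ) else if j < k then -1 else 0) * ω ^ j
      = (1 + ω) * ω ^ k := by
  have gen : ∀ n, (1 - ω) * ∑ j ∈ range (k + 1 + n),
      (if k < j then (1:ℂ) else if j < k then -1 else 0) * ω ^ j
      = ω ^ (k+1) - ω ^ (k+1+n) - (1 - ω ^ k) := by
    intro n
    induction n with
    | zero =>
      rw [add_zero, sum_range_succ]
      have h1 : ∑ j ∈ range k, (if k < j then (1:ℂ) else if j < k then -1 else 0) * ω ^ j
          = - ∑ j ∈ range k, ω ^ j := by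
        rw [← sum_neg_distrib]
        refine sum_congr rfl fun j hj => ?_
        have := mem_range.1 hj
        rw [if_neg (by omega), if_pos this]; ring
      rw [h1]
      have h2 := mul_neg_geom_sum ω k
      simp only [lt_irrefl, if_false]
      linear_combination -h2
    | succ n ih =>
      rw [← add_assoc, sum_range_succ, mul_add, ih, if_pos (by omega)]
      ring
  obtain ⟨n, rfl⟩ : ∃ n, s = k + 1 + n := ⟨s - (k+1), by omega⟩
  rw [gen, hω]; ring

lemma aux_drt {v : ℕ} (A : Matrix (Fin v) (Fin v) ℂ) (hA : IsDRT A) :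
    (A - Aᵀ) * (A - Aᵀ)ᵀ = (v : ℂ) • (1 : Matrix (Fin v) (Fin v) ℂ) - Matrix.of (fun _ _ => 1) := by
  obtain ⟨⟨⟨h01, h0⟩, hT⟩, hv, hreg, hdr⟩ := hA
  have hS : ∀ x y, A x y + A y x = 1 - (1 : Matrix (Fin v) (Fin v) ℂ) x y := by
    intro x y
    have := congrFun (congrFun hT x) y
    simpa using this
  have hrow : ∀ x, ∑ z, A x z = ((v:ℂ) - 1) / 2 := by
    intro x
    have h1 : ∑ z, A x z = ((univ.filter fun y => A x y = 1).card : ℂ) := by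
      rw [card_filter]; push_cast
      refine sum_congr rfl fun z _ => ?_
      rcases h01 x z with h | h <;> simp [h]
    rw [h1, hreg]
    obtain ⟨m, rfl⟩ : ∃ m, v = 4 * m + 3 := ⟨v / 4, by omega⟩
    rw [show (4 * m + 3 - 1) / 2 = 2 * m + 1 by omega]; push_cast; ring
  have hdr' : ∀ x y, x ≠ y → ∑ z, A x z * A y z = ((v:ℂ) - 3) / 4 := by
    intro x y hxy
    have h1 : ∑ z, A x z * A y z = ((univ.filter fun z => A x z = 1 ∧ A y z = 1).card : ℂ) := by
      rw [card_filter]; push_cast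
      refine sum_congr rfl fun z _ => ?_
      rcases h01 x z with h | h <;> rcases h01 y z with h' | h' <;> simp [h, h']
    rw [h1, hdr x y hxy]
    obtain ⟨m, rfl⟩ : ∃ m, v = 4 * m + 3 := ⟨v / 4, by omega⟩
    rw [show (4 * m + 3 - 3) / 4 = m by omega]; push_cast; ring
  have hdd : ∀ x, ∑ z, A x z * A x z = ((v:ℂ) - 1) / 2 := by
    intro x
    rw [← hrow x]
    refine sum_congr rfl fun z _ => ?_
    rcases h01 x z with h | h <;> simp [h]
  ext x y
  have e : ∀ x z, A x z - A z x = 2 * A x z - 1 + (1 : Matrix (Fin v) (Fin v) ℂ) x z := by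
    intro x z; linear_combination -hS x z
  have key : ((A - Aᵀ) * (A - Aᵀ)ᵀ) x y = 4 * ∑ z, A x z * A y z - 2 * ∑ z, A x z - 2 * ∑ z, A y z
      + v + 2 * A x y + 2 * A y x - 2 + (1 : Matrix (Fin v) (Fin v) ℂ) x y := by
    rw [Matrix.mul_apply]
    simp only [Matrix.transpose_apply, Matrix.sub_apply, e]
    have : ∀ z, (2 * A x z - 1 + (1 : Matrix (Fin v) (Fin v) ℂ) x z) *
        (2 * A y z - 1 + (1 : Matrix (Fin v) (Fin v) ℂ) y z)
        = 4 * (A x z * A y z) - 2 * A x z - 2 * A y z + 1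
          + (1 : Matrix (Fin v) (Fin v) ℂ) x z * (2 * A y z - 1)
          + (2 * A x z - 1) * (1 : Matrix (Fin v) (Fin v) ℂ) y z
          + (1 : Matrix (Fin v) (Fin v) ℂ) x z * (1 : Matrix (Fin v) (Fin v) ℂ) y z := by
      intro z; ring
    simp only [this, sum_add_distrib, sum_sub_distrib, ← mul_sum]
    simp only [Matrix.one_apply, ite_mul, mul_ite, one_mul, mul_one, zero_mul, mul_zero,
      sum_ite_eq, mem_univ, if_true, sum_const, card_univ, Fintype.card_fin, nsmul_eq_mul]
    by_cases hxy : x = y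
    · subst hxy; simp; ring
    · simp [hxy, Ne.symm hxy]; ring
  rw [key, hrow, hrow]
  by_cases hxy : x = y
  · subst hxy
    rw [hdd, h0]; simp; ring
  · rw [hdr' x y hxy]
    have := hS x y
    simp [hxy] at this ⊢
    linear_combination 2 * this

lemma aux_norm {v : ℕ} (S : Matrix (Fin v) (Fin v) ℂ)
    (hS : Sᴴ * S = (v : ℂ) • (1 : Matrix (Fin v) (Fin v) ℂ) - Matrix.of (fun _ _ => 1))
    (u : Fin v → ℂ) :
    ∑ x, Complex.normSq ((S *ᵥ u) x) ≤ v * ∑ x, Complex.normSq (u x) := by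
  have h0 : ∀ w : Fin v → ℂ, star w ⬝ᵥ w = ((∑ x, Complex.normSq (w x) : ℝ) : ℂ) := by
    intro w
    simp [dotProduct, Complex.normSq_eq_conj_mul_self]
  have h1 : star (S *ᵥ u) ⬝ᵥ (S *ᵥ u) = star u ⬝ᵥ ((Sᴴ * S) *ᵥ u) := by
    rw [star_mulVec, ← dotProduct_mulVec, mulVec_mulVec]
  have h2 : star u ⬝ᵥ ((Matrix.of (fun _ _ => 1) : Matrix (Fin v) (Fin v) ℂ) *ᵥ u)
      = ((Complex.normSq (∑ x, u x) : ℝ) : ℂ) := by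
    simp [dotProduct, mulVec, Complex.normSq_eq_conj_mul_self, sum_mul]
  rw [hS, sub_mulVec, dotProduct_sub, smul_mulVec, one_mulVec, dotProduct_smul, h2, h0, h0] at h1
  have h3 : ∑ x, Complex.normSq ((S *ᵥ u) x)
      = v * ∑ x, Complex.normSq (u x) - Complex.normSq (∑ x, u x) := by
    apply Complex.ofReal_injective
    rw [h1]; push_cast; simp
  rw [h3]
  linarith [Complex.normSq_nonneg (∑ x, u x)]

lemma aux_rank {v : ℕ} (A : Matrix (Fin v) (Fin v) ℂ) (h0 : ∀ x, A x x = 0)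
    (T : Finset (Fin v)) (hT : IsTransSubtournament A T) :
    ∃ r : Fin v → ℕ, (∀ x ∈ T, ∀ y ∈ T, A x y = 1 → r x < r y) ∧
      Set.InjOn r T ∧ T.image r = range T.card := by
  classical
  let r : Fin v → ℕ := fun x => (T.filter fun y => A y x = 1).card
  have hlt : ∀ x ∈ T, ∀ y ∈ T, A x y = 1 → r x < r y := by
    intro x hx y hy hxy
    apply card_lt_card
    rw [Finset.ssubset_iff_of_subset]
    · exact ⟨x, by simp [hx, hxy], by simp [h0]⟩
    · intro z hz
      simp only [mem_filter] at hz ⊢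
      exact ⟨hz.1, hT.2 z hz.1 x hx y hy hz.2 hxy⟩
  have hinj : Set.InjOn r T := by
    intro x hx y hy hxy
    by_contra hne
    rcases hT.1 x hx y hy hne with h | h
    · have := hlt x hx y hy h.1; omega
    · have := hlt y hy x hx h.1; omega
  refine ⟨r, hlt, hinj, ?_⟩
  apply eq_of_subset_of_card_le
  · intro k hk
    obtain ⟨x, hx, rfl⟩ := mem_image.1 hk
    rw [mem_range]
    apply card_lt_card
    rw [Finset.ssubset_iff_of_subset (filter_subset _ _)]
    exact ⟨x, hx, by simp [h0]⟩
  · rw [card_range, card_image_of_injOn hinj]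

lemma aux_main {v s : ℕ} (A : Matrix (Fin v) (Fin v) ℂ) (hA : IsDRT A)
    (T : Finset (Fin v)) (hT : IsTransSubtournament A T) (hTcard : T.card = s) (hs : 0 < s)
    (ω : ℂ) (hω : ω ^ s = -1) (hn : Complex.normSq ω = 1) :
    Complex.normSq (1 + ω) ≤ v * Complex.normSq (1 - ω) := by
  classical
  have h01 := hA.1.1.1
  have h0 := hA.1.1.2
  obtain ⟨r, hlt, hinj, him⟩ := aux_rank A h0 T hT
  rw [hTcard] at him
  have hreal : ∀ x y, star (A x y) = A x y := by
    intro x y; rcases h01 x y with h | h <;> simp [h]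
  have hSS : (A - Aᵀ)ᴴ * (A - Aᵀ)
      = (v : ℂ) • (1 : Matrix (Fin v) (Fin v) ℂ) - Matrix.of (fun _ _ => 1) := by
    rw [← aux_drt A hA]
    have h1 : (A - Aᵀ)ᴴ = -(A - Aᵀ) := by
      ext x y; simp only [conjTranspose_apply, Matrix.sub_apply, star_sub, transpose_apply, hreal,
        Matrix.neg_apply]; ring
    have h2 : (A - Aᵀ)ᵀ = -(A - Aᵀ) := by
      ext x y; simp
    rw [h1, h2, neg_mul, mul_neg]
  let u : Fin v → ℂ := fun y => if y ∈ T then ω ^ r y else 0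
  have hb := aux_norm _ hSS u
  have hsub : ∀ x ∈ T, (1 - ω) * ((A - Aᵀ) *ᵥ u) x = (1 + ω) * ω ^ r x := by
    intro x hx
    have hk : r x < s := by
      rw [← mem_range, ← him]; exact mem_image_of_mem r hx
    rw [← aux_sum ω s (r x) hk hω, ← him, sum_image hinj]
    congr 1
    simp only [mulVec, dotProduct, u, mul_ite, mul_zero]
    rw [sum_ite_mem, univ_inter]
    refine sum_congr rfl fun y hy => ?_
    congr 1
    simp only [Matrix.sub_apply, transpose_apply]
    by_cases hxy : x = y
    · subst hxy; simp
    · rcases hT.1 x hx y hy hxy with h | h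
      · have := hlt x hx y hy h.1
        rw [h.1, (h01 y x).resolve_right h.2, if_pos this]; ring
      · have := hlt y hy x hx h.1
        rw [h.1, (h01 x y).resolve_right h.2, if_neg (by omega), if_pos this]; ring
  have hu : ∑ x, Complex.normSq (u x) = s := by
    have : ∀ x, Complex.normSq (u x) = if x ∈ T then 1 else 0 := by
      intro x; by_cases h : x ∈ T <;> simp [u, h, hn]
    simp [this, hTcard]
  have hle : ∑ x ∈ T, Complex.normSq (((A - Aᵀ) *ᵥ u) x) ≤ v * s := by
    rw [← hu]
    exact (sum_le_univ_sum_of_nonneg fun x => Complex.normSq_nonneg _).trans hb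
  have h4 : Complex.normSq (1 - ω) * ∑ x ∈ T, Complex.normSq (((A - Aᵀ) *ᵥ u) x)
      = s * Complex.normSq (1 + ω) := by
    rw [mul_sum, ← hTcard, ← nsmul_eq_mul, ← sum_const]
    refine sum_congr rfl fun x hx => ?_
    rw [← map_mul, hsub x hx]; simp [hn]
  have h5 := mul_le_mul_of_nonneg_left hle (Complex.normSq_nonneg (1 - ω))
  rw [h4] at h5
  have hs' : (0:ℝ) < s := by exact_mod_cast hs
  nlinarith

/-- If a doubly regular tournament on `v` vertices contains a transitive subtournament of
size `s`, then `2 s arccot(√v) ≤ π`. -/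
theorem interlacing_bound_doubly_regular_tournament
    {v s : ℕ} (A : Matrix (Fin v) (Fin v) ℂ) (hA : IsDRT A)
    (T : Finset (Fin v)) (hT : IsTransSubtournament A T) (hTcard : T.card = s) :
    2 * (s : ℝ) * arccot (Real.sqrt v) ≤ Real.pi := by
  rcases Nat.eq_zero_or_pos s with rfl | hs
  · simp [Real.pi_pos.le]
  have hs' : (0:ℝ) < s := by exact_mod_cast hs
  have hs1 : (1:ℝ) ≤ s := by exact_mod_cast hs
  obtain ⟨φ, hφ⟩ : ∃ φ : ℝ, φ = Real.pi / (2 * s) := ⟨_, rfl⟩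
  have hφs : 2 * s * φ = Real.pi := by rw [hφ]; field_simp
  have hφ0 : 0 < φ := by rw [hφ]; positivity
  have hφ1 : φ ≤ Real.pi / 2 := by nlinarith
  have hω : (Complex.exp ((2 * φ : ℝ) * Complex.I)) ^ s = -1 := by
    rw [← Complex.exp_nat_mul, ← Complex.exp_pi_mul_I, ← hφs]
    congr 1; push_cast; ring
  have hre : (Complex.exp ((2 * φ : ℝ) * Complex.I)).re = Real.cos (2 * φ) :=
    Complex.exp_ofReal_mul_I_re _
  have him : (Complex.exp ((2 * φ : ℝ) * Complex.I)).im = Real.sin (2 * φ) :=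
    Complex.exp_ofReal_mul_I_im _
  have hsc := Real.sin_sq_add_cos_sq (2 * φ)
  have hm := aux_main A hA T hT hTcard hs _ hω (by
    rw [Complex.normSq_apply, hre, him]; nlinarith)
  simp only [Complex.normSq_apply, Complex.add_re, Complex.add_im, Complex.sub_re, Complex.sub_im,
    hre, him, Complex.one_re, Complex.one_im] at hm
  have hsin : 0 < Real.sin φ := Real.sin_pos_of_pos_of_lt_pi hφ0 (by linarith [Real.pi_pos])
  have hc2 := Real.cos_two_mul φ
  have hs2 := Real.sin_sq_add_cos_sq φ
  have e1 : (1 + Real.cos (2 * φ)) * (1 + Real.cos (2 * φ))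
      + (0 + Real.sin (2 * φ)) * (0 + Real.sin (2 * φ)) = 4 * Real.cos φ ^ 2 := by
    linear_combination hsc + 2 * hc2
  have e2 : (1 - Real.cos (2 * φ)) * (1 - Real.cos (2 * φ))
      + (0 - Real.sin (2 * φ)) * (0 - Real.sin (2 * φ)) = 4 * Real.sin φ ^ 2 := by
    linear_combination hsc - 2 * hc2 - 4 * hs2
  rw [e1, e2] at hm
  have hv0 : (0:ℝ) ≤ v := Nat.cast_nonneg v
  have hle : Real.cos φ ≤ Real.sqrt v * Real.sin φ := by
    apply le_of_sq_le_sq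
    · rw [mul_pow, Real.sq_sqrt hv0]; linarith
    · positivity
  have htan : Real.tan (Real.pi / 2 - φ) ≤ Real.sqrt v := by
    rw [Real.tan_eq_sin_div_cos, Real.sin_pi_div_two_sub, Real.cos_pi_div_two_sub]
    rwa [div_le_iff₀ hsin]
  have hat := Real.arctan_mono htan
  rw [Real.arctan_tan (by linarith [Real.pi_pos]) (by linarith)] at hat
  have : arccot (Real.sqrt v) ≤ φ := by unfold arccot; linarith
  calc 2 * (s:ℝ) * arccot (Real.sqrt v) ≤ 2 * s * φ := by gcongr
    _ = _ := hφs
end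

section
/- Let G be a digraph on v vertices, let Γ be a transitive subtournament of size s in G with characteristic vector χ ∈ ℂ^v, and let S_G be the Seidel matrix of G. Then s(s²−1)/3 ≤ χ* S_G S_G* χ, with equality if and only if for every vertex x ∉ V(Γ), the number of vertices y ∈ V(Γ) with an arc (y,x) equals the number of vertices y ∈ V(Γ) with an arc (x,y). -/
open Matrix Finset

theorem aux_sink {v : ℕ} (A : Matrix (Fin v) (Fin v) ℂ) (hA : IsDigraph A)
    (T : Finset (Fin v)) (hT : IsTransSubtournament A T) (hne : T.Nonempty) :
    ∃ m ∈ T, ∀ y ∈ T, A m y = 0 := by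
  obtain ⟨m, hm, hmax⟩ := Finset.exists_max_image T
    (fun x => (T.filter fun y => A y x = 1).card) hne
  refine ⟨m, hm, fun y hy => ?_⟩
  rcases hA.1 m y with h | h
  · exact h
  exfalso
  have h1 := hmax y hy
  have h2 : (T.filter fun z => A z m = 1).card < (T.filter fun z => A z y = 1).card := by
    apply Finset.card_lt_card
    rw [Finset.ssubset_iff_of_subset]
    · refine ⟨m, by simp [hm, h], by simp [hA.2 m]⟩
    · intro z hz
      simp only [Finset.mem_filter] at hz ⊢
      exact ⟨hz.1, hT.2 z hz.1 m hm y hy hz.2 h⟩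
  exact absurd h1 (by simpa using h2)

theorem aux_anti {v : ℕ} (A : Matrix (Fin v) (Fin v) ℂ) (T : Finset (Fin v)) :
    ∑ x ∈ T, ∑ y ∈ T, ((A y x).re - (A x y).re) = 0 := by
  simp only [Finset.sum_sub_distrib]
  rw [Finset.sum_comm, sub_self]

theorem aux_sum_s5 {v : ℕ} (A : Matrix (Fin v) (Fin v) ℂ) (hA : IsDigraph A) (n : ℕ) :
    ∀ (T : Finset (Fin v)), IsTransSubtournament A T → T.card = n →
    ∑ x ∈ T, (∑ y ∈ T, ((A y x).re - (A x y).re)) ^ 2 = (n : ℝ) * ((n : ℝ) ^ 2 - 1) / 3 := by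
  induction n with
  | zero =>
    intro T _ hc
    rw [Finset.card_eq_zero] at hc
    simp [hc]
  | succ n ih =>
    intro T hT hc
    obtain ⟨m, hm, hs⟩ := aux_sink A hA T hT (Finset.card_pos.mp (by omega))
    have hin : ∀ y ∈ T.erase m, A y m = 1 := by
      intro y hy
      rw [Finset.mem_erase] at hy
      rcases hT.1 y hy.2 m hm hy.1 with h | h
      · exact h.1
      · have := h.1
        rw [hs y hy.2] at this
        simp at this
    have hs' : ∀ y ∈ T.erase m, A m y = 0 := fun y hy => hs y (Finset.mem_of_mem_erase hy)
    have hc' : (T.erase m).card = n := by rw [Finset.card_erase_of_mem hm]; omega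
    have hT' : IsTransSubtournament A (T.erase m) :=
      ⟨fun x hx y hy => hT.1 x (Finset.mem_of_mem_erase hx) y (Finset.mem_of_mem_erase hy),
       fun x hx y hy z hz => hT.2 x (Finset.mem_of_mem_erase hx) y (Finset.mem_of_mem_erase hy)
        z (Finset.mem_of_mem_erase hz)⟩
    have key := ih _ hT' hc'
    have anti := aux_anti A (T.erase m)
    have hnm : m ∉ T.erase m := Finset.notMem_erase m T
    rw [← Finset.insert_erase hm]
    generalize T.erase m = U at *
    rw [Finset.sum_insert hnm]
    simp only [Finset.sum_insert hnm]
    have e1 : ∑ y ∈ U, ((A y m).re - (A m y).re) = (n : ℝ) := by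
      rw [← hc', Finset.card_eq_sum_ones]
      push_cast
      exact Finset.sum_congr rfl fun y hy => by simp [hin y hy, hs' y hy]
    have e2 : ∀ x ∈ U, ((A m x).re - (A x m).re + ∑ y ∈ U, ((A y x).re - (A x y).re)) ^ 2
        = (∑ y ∈ U, ((A y x).re - (A x y).re)) ^ 2
          - 2 * (∑ y ∈ U, ((A y x).re - (A x y).re)) + 1 := by
      intro x hx
      rw [hin x hx, hs' x hx]
      simp only [Complex.zero_re, Complex.one_re]
      ring
    rw [e1, Finset.sum_congr rfl e2, Finset.sum_add_distrib, Finset.sum_sub_distrib,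
      ← Finset.mul_sum, key, anti]
    simp [hc']
    ring

theorem aux_count {v : ℕ} (A : Matrix (Fin v) (Fin v) ℂ) (hA : IsDigraph A)
    (T : Finset (Fin v)) (x : Fin v) :
    ∑ y ∈ T, ((A y x).re - (A x y).re) =
      ((T.filter fun y => A y x = 1).card : ℝ) - ((T.filter fun y => A x y = 1).card : ℝ) := by
  rw [Finset.sum_sub_distrib, Finset.card_filter, Finset.card_filter]
  push_cast
  congr 1 <;> refine Finset.sum_congr rfl fun y _ => ?_
  · rcases hA.1 y x with h | h <;> simp [h]
  · rcases hA.1 x y with h | h <;> simp [h]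

theorem aux_form {v : ℕ} (A : Matrix (Fin v) (Fin v) ℂ) (hA : IsDigraph A)
    (T : Finset (Fin v)) (χ : Fin v → ℂ) (hχ : ∀ x, χ x = if x ∈ T then 1 else 0) :
    (star χ ⬝ᵥ ((Seidel A * (Seidel A)ᴴ) *ᵥ χ)).re =
      ∑ x, (∑ y ∈ T, ((A y x).re - (A x y).re)) ^ 2 := by
  have hre : ∀ x y, A x y = ((A x y).re : ℂ) := by
    intro x y
    rcases hA.1 x y with h | h <;> simp [h]
  have h1 : ∀ x, ((Seidel A)ᴴ *ᵥ χ) x =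
      -Complex.I * ((∑ y ∈ T, ((A y x).re - (A x y).re) : ℝ) : ℂ) := by
    intro x
    simp only [Matrix.mulVec, dotProduct, hχ, mul_ite, mul_one, mul_zero]
    rw [Finset.sum_ite_mem, Finset.univ_inter]
    push_cast
    rw [Finset.mul_sum]
    refine Finset.sum_congr rfl fun y _ => ?_
    rw [← hre, ← hre]
    rcases hA.1 x y with h | h <;> rcases hA.1 y x with h' | h' <;>
      simp [Seidel, Matrix.conjTranspose_apply, h, h']
  have h2 : star χ ⬝ᵥ ((Seidel A * (Seidel A)ᴴ) *ᵥ χ) =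
      star ((Seidel A)ᴴ *ᵥ χ) ⬝ᵥ ((Seidel A)ᴴ *ᵥ χ) := by
    rw [← Matrix.mulVec_mulVec, Matrix.dotProduct_mulVec, Matrix.star_mulVec,
      Matrix.conjTranspose_conjTranspose]
  rw [h2, dotProduct, Complex.re_sum]
  refine Finset.sum_congr rfl fun x _ => ?_
  rw [Pi.star_apply, h1]
  generalize (∑ y ∈ T, ((A y x).re - (A x y).re) : ℝ) = d
  simp
  ring

/-- If `χ` is the characteristic vector of a transitive subtournament `Γ` of size `s` in a
digraph `G`, then `s(s²-1)/3 ≤ χ* S_G S_G* χ`, with equality iff for every vertex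
`x ∉ V(Γ)` the number of vertices of `Γ` dominating `x` equals the number of vertices of
`Γ` dominated by `x`. -/
theorem quadratic_form_lower_bound_with_equality
    {v s : ℕ} (A : Matrix (Fin v) (Fin v) ℂ) (hA : IsDigraph A)
    (T : Finset (Fin v)) (hT : IsTransSubtournament A T) (hTcard : T.card = s)
    (χ : Fin v → ℂ) (hχ : ∀ x, χ x = if x ∈ T then 1 else 0) :
    (s : ℝ) * ((s : ℝ) ^ 2 - 1) / 3 ≤
      (star χ ⬝ᵥ ((Seidel A * (Seidel A)ᴴ) *ᵥ χ)).re ∧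
    ((star χ ⬝ᵥ ((Seidel A * (Seidel A)ᴴ) *ᵥ χ)).re = (s : ℝ) * ((s : ℝ) ^ 2 - 1) / 3 ↔
      ∀ x, x ∉ T →
        (T.filter fun y => A y x = 1).card = (T.filter fun y => A x y = 1).card) := by
  have hsum := aux_sum_s5 A hA s T hT hTcard
  rw [aux_form A hA T χ hχ, ← Finset.sum_add_sum_compl T, hsum]
  have hnn : ∀ x ∈ Tᶜ, 0 ≤ (∑ y ∈ T, ((A y x).re - (A x y).re)) ^ 2 := fun x _ => sq_nonneg _
  refine ⟨le_add_of_nonneg_right (Finset.sum_nonneg hnn), ?_⟩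
  rw [add_eq_left, Finset.sum_eq_zero_iff_of_nonneg hnn]
  refine forall_congr' fun x => ?_
  rw [Finset.mem_compl, aux_count A hA, sq_eq_zero_iff, sub_eq_zero, Nat.cast_inj]
end

section
/- Let G be a digraph on v vertices containing a transitive subtournament of size s. Let α = max{θ : θ ∈ M(G)} be the largest main eigenvalue of the Seidel matrix S_G, suppose ev(G)∖M(G) is nonempty and let γ = max{θ : θ ∈ ev(G)∖M(G)}. If α ≤ γ, then s ≤ (3α² − 3γ² + √(4v²(1+3γ²) + 9(γ²−α²)²))/(2v). -/
open Matrix Finset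

/-- `P` is the orthogonal projection of `ℂ^v` onto the `θ`-eigenspace of `S`:
a Hermitian idempotent whose fixed space is exactly the `θ`-eigenspace. -/
def IsEigenProjection {v : ℕ} (S : Matrix (Fin v) (Fin v) ℂ) (θ : ℝ)
    (P : Matrix (Fin v) (Fin v) ℂ) : Prop :=
  P.IsHermitian ∧ P * P = P ∧ ∀ x : Fin v → ℂ, S *ᵥ x = (θ : ℂ) • x ↔ P *ᵥ x = x

open scoped ComplexOrder in
lemma aux_dot {v : ℕ} (x : Fin v → ℂ) (h : star x ⬝ᵥ x = 0) : x = 0 := by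
  rwa [dotProduct_star_self_eq_zero] at h

lemma aux_basis {v : ℕ} (S : Matrix (Fin v) (Fin v) ℂ) (hH : S.IsHermitian) :
    ∃ U : Fin v → Fin v → ℂ, (∀ i, S *ᵥ U i = (hH.eigenvalues i : ℂ) • U i) ∧ (∀ i, U i ≠ 0) ∧
      (∀ i x, star (U i) ⬝ᵥ (S *ᵥ x) = (hH.eigenvalues i : ℂ) * (star (U i) ⬝ᵥ x)) ∧
      (∀ x y : Fin v → ℂ, ∑ i, star (star (U i) ⬝ᵥ x) * (star (U i) ⬝ᵥ y) = star x ⬝ᵥ y) := by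
  have h1 : ∀ i, S *ᵥ (hH.eigenvectorBasis i : Fin v → ℂ)
      = (hH.eigenvalues i : ℂ) • (hH.eigenvectorBasis i : Fin v → ℂ) := fun i => by
    have := hH.mulVec_eigenvectorBasis i
    rw [this]; ext; simp
  refine ⟨fun i => hH.eigenvectorBasis i, h1, ?_, ?_, ?_⟩
  · intro i h
    have := hH.eigenvectorBasis.orthonormal.ne_zero i
    apply this
    ext j
    exact congrFun h j
  · intro i x
    rw [dotProduct_mulVec]
    have : star (hH.eigenvectorBasis i : Fin v → ℂ) ᵥ* S = star (S *ᵥ (hH.eigenvectorBasis i : Fin v → ℂ)) := by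
      rw [star_mulVec, hH.eq]
    rw [this, h1]
    simp
  · intro x y
    have := hH.eigenvectorBasis.sum_inner_mul_inner (WithLp.toLp 2 x) (WithLp.toLp 2 y)
    simp only [EuclideanSpace.inner_eq_star_dotProduct] at this
    rw [dotProduct_comm, ← this]
    refine Finset.sum_congr rfl fun i _ => ?_
    simp [star_dotProduct, dotProduct_comm]

lemma aux_score (s : ℕ) : ∑ j ∈ Finset.range s, (2 * (j : ℝ) - (s - 1)) ^ 2 = (s : ℝ) * ((s : ℝ) ^ 2 - 1) / 3 := by
  have h : ∀ (t : ℝ) (s : ℕ), ∑ j ∈ Finset.range s, (2 * (j : ℝ) - t) ^ 2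
      = 4 * ((s - 1) * s * (2 * s - 1) / 6) - 4 * t * (s * (s - 1) / 2) + s * t ^ 2 := by
    intro t s
    induction s with
    | zero => simp
    | succ n ih => rw [Finset.sum_range_succ, ih]; push_cast; ring
  rw [h]; ring

lemma aux_tour {v : ℕ} (A : Matrix (Fin v) (Fin v) ℂ) (hA : IsDigraph A)
    (T : Finset (Fin v)) (hT : IsTransSubtournament A T) :
    ∑ x ∈ T, ‖∑ y ∈ T, (A x y - A y x)‖ ^ 2 = T.card * ((T.card : ℝ) ^ 2 - 1) / 3 := by
  classical
  let d : Fin v → ℕ := fun x => (T.filter (fun y => A x y = 1)).card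
  have key : ∀ x ∈ T, ‖∑ y ∈ T, (A x y - A y x)‖ ^ 2 = (2 * (d x : ℝ) - (T.card - 1)) ^ 2 := by
    intro x hx
    have h1 : ∑ y ∈ T, (A x y - A y x) = ((2 * (d x : ℝ) - (T.card - 1) : ℝ) : ℂ) := by
      have h2 : ∀ y ∈ T, A x y - A y x
          = 2 * (if A x y = 1 then (1 : ℂ) else 0) - 1 + (if y = x then 1 else 0) := by
        intro y hy
        by_cases hyx : y = x
        · subst hyx; simp [hA.2]
        · have := hT.1 x hx y hy (Ne.symm hyx)
          rcases hA.1 x y with h | h <;> rcases hA.1 y x with h' | h' <;>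
            simp [h, h', hyx, Xor'] at this ⊢
          norm_num
      rw [Finset.sum_congr rfl h2]
      simp only [Finset.sum_add_distrib, Finset.sum_sub_distrib, ← Finset.mul_sum, d]
      simp [hx]
      ring
    rw [h1, Complex.norm_real, Real.norm_eq_abs, sq_abs]
  rw [Finset.sum_congr rfl key, ← aux_score]
  have lt : ∀ x ∈ T, ∀ y ∈ T, A x y = 1 → d y < d x := by
    intro x hx y hy h
    apply Finset.card_lt_card
    rw [Finset.ssubset_iff_of_subset]
    · exact ⟨y, by simp [hy, h], by simp [hA.2]⟩
    · intro z hz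
      simp only [Finset.mem_filter] at hz ⊢
      exact ⟨hz.1, hT.2 x hx y hy z hz.1 h hz.2⟩
  have inj : Set.InjOn d T := by
    intro x hx y hy h
    by_contra hne
    rcases hT.1 x hx y hy hne with h' | h'
    · have := lt x hx y hy h'.1; omega
    · have := lt y hy x hx h'.1; omega
  have im : T.image d = Finset.range T.card := by
    apply Finset.eq_of_subset_of_card_le
    · intro j hj
      obtain ⟨x, hx, rfl⟩ := Finset.mem_image.1 hj
      rw [Finset.mem_range]
      apply Finset.card_lt_card
      rw [Finset.ssubset_iff_of_subset (Finset.filter_subset _ _)]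
      exact ⟨x, hx, by simp [hA.2]⟩
    · rw [Finset.card_range, Finset.card_image_of_injOn inj]
  rw [← im, Finset.sum_image inj]

lemma aux_seidel_conj {v : ℕ} (A : Matrix (Fin v) (Fin v) ℂ) (hA : IsDigraph A) (w : Fin v → ℂ)
    (θ : ℝ) (h : Seidel A *ᵥ w = (θ : ℂ) • w) :
    Seidel A *ᵥ star w = ((-θ : ℝ) : ℂ) • star w := by
  have hs : ∀ x y, star (Seidel A x y) = - Seidel A x y := by
    intro x y
    rcases hA.1 x y with h | h <;> rcases hA.1 y x with h' | h' <;> simp [Seidel, h, h']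
  ext x
  have := congrArg star (congrFun h x)
  simp only [mulVec, dotProduct, Pi.smul_apply, Pi.star_apply, smul_eq_mul, star_sum, star_mul', hs] at this ⊢
  simp only [neg_mul, Finset.sum_neg_distrib] at this
  rw [neg_eq_iff_eq_neg] at this
  rw [this]; simp

lemma aux_final (s v a g : ℝ) (hv : 0 < v) (hs : 0 ≤ s) (hag : a ^ 2 ≤ g ^ 2)
    (h : s * (s ^ 2 - 1) / 3 ≤ g ^ 2 * s - (g ^ 2 - a ^ 2) * (s ^ 2 / v)) :
    s ≤ (3 * a ^ 2 - 3 * g ^ 2 +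
      Real.sqrt (4 * v ^ 2 * (1 + 3 * g ^ 2) + 9 * (g ^ 2 - a ^ 2) ^ 2)) / (2 * v) := by
  rw [le_div_iff₀ (by positivity)]
  have : s * (2 * v) + 3 * (g ^ 2 - a ^ 2) ≤ 
      Real.sqrt (4 * v ^ 2 * (1 + 3 * g ^ 2) + 9 * (g ^ 2 - a ^ 2) ^ 2) := by
    apply Real.le_sqrt_of_sq_le
    rcases hs.eq_or_lt with h0 | h0
    · rw [← h0]
      have : 0 ≤ 4 * v ^ 2 * (1 + 3 * g ^ 2) := by positivity
      nlinarith
    · have h1 : s * v * (v * s ^ 2 + 3 * (g ^ 2 - a ^ 2) * s) ≤ s * v * (v * (1 + 3 * g ^ 2)) := by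
        have := mul_le_mul_of_nonneg_left h (by positivity : 0 ≤ 3 * v ^ 2)
        have e : 3 * v ^ 2 * (g ^ 2 * s - (g ^ 2 - a ^ 2) * (s ^ 2 / v))
          = 3 * v ^ 2 * g ^ 2 * s - 3 * v * (g ^ 2 - a ^ 2) * s ^ 2 := by field_simp
        rw [e] at this
        nlinarith
      have h2 := le_of_mul_le_mul_left h1 (by positivity)
      have := mul_le_mul_of_nonneg_left h2 (by positivity : 0 ≤ 4 * v)
      nlinarith
  linarith

/-- Hoffman-type bound for digraphs: if a digraph with `v` vertices contains a transitive
subtournament of size `s`, `α` is the largest main eigenvalue of its Seidel matrix, `γ` is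
the largest non-main eigenvalue, and `α ≤ γ`, then
`s ≤ (3α² − 3γ² + √(4v²(1+3γ²) + 9(γ²−α²)²))/(2v)`. -/
theorem hoffman_type_bound_digraph
    {v s : ℕ} (A : Matrix (Fin v) (Fin v) ℂ) (hA : IsDigraph A)
    (hH : (Seidel A).IsHermitian)
    (E : ℝ → Matrix (Fin v) (Fin v) ℂ)
    (hE : ∀ θ ∈ Finset.univ.image hH.eigenvalues, IsEigenProjection (Seidel A) θ (E θ))
    (T : Finset (Fin v)) (hT : IsTransSubtournament A T) (hTcard : T.card = s)
    (α γ : ℝ)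
    (hα₁ : α ∈ Finset.univ.image hH.eigenvalues ∧ E α *ᵥ (fun _ => 1) ≠ 0)
    (hα₂ : ∀ θ ∈ Finset.univ.image hH.eigenvalues, E θ *ᵥ (fun _ => 1) ≠ 0 → θ ≤ α)
    (hγ₁ : γ ∈ Finset.univ.image hH.eigenvalues ∧ E γ *ᵥ (fun _ => 1) = 0)
    (hγ₂ : ∀ θ ∈ Finset.univ.image hH.eigenvalues, E θ *ᵥ (fun _ => 1) = 0 → θ ≤ γ)
    (hαγ : α ≤ γ) :
    (s : ℝ) ≤ (3 * α ^ 2 - 3 * γ ^ 2 +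
      Real.sqrt (4 * (v : ℝ) ^ 2 * (1 + 3 * γ ^ 2) + 9 * (γ ^ 2 - α ^ 2) ^ 2)) /
        (2 * (v : ℝ)) := by
  classical
  obtain ⟨U, hU, hU0, hUS, hP⟩ := aux_basis _ hH
  set one : Fin v → ℂ := fun _ => 1 with hone
  have hv : 0 < v := by
    obtain ⟨i, -⟩ := Finset.mem_image.1 hα₁.1
    exact i.pos
  -- spectrum is symmetric
  have hneg : ∀ θ ∈ Finset.univ.image hH.eigenvalues, -θ ∈ Finset.univ.image hH.eigenvalues := by
    intro θ hθ
    obtain ⟨i, -, rfl⟩ := Finset.mem_image.1 hθ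
    have h := aux_seidel_conj A hA _ _ (hU i)
    by_contra hcon
    have hz : ∀ j, star (U j) ⬝ᵥ star (U i) = 0 := by
      intro j
      have h1 := hUS j (star (U i))
      rw [h, dotProduct_smul, smul_eq_mul, mul_eq_mul_right_iff] at h1
      rcases h1 with h1 | h1
      · exact absurd (Finset.mem_image.2 ⟨j, Finset.mem_univ _, (Complex.ofReal_injective h1).symm⟩) hcon
      · exact h1
    have h2 := hP (star (U i)) (star (U i))
    simp only [hz, mul_zero, Finset.sum_const_zero] at h2
    have h3 := aux_dot _ h2.symm
    exact hU0 i (star_eq_zero.1 h3)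
  -- non-main eigenvectors are orthogonal to one
  have horth : ∀ θ ∈ Finset.univ.image hH.eigenvalues, E θ *ᵥ one = 0 → ∀ w,
      Seidel A *ᵥ w = (θ : ℂ) • w → star w ⬝ᵥ one = 0 := by
    intro θ hθ h0 w hw
    obtain ⟨h1, h2, h3⟩ := hE θ hθ
    have h4 := (h3 w).1 hw
    rw [← h4, star_mulVec, h1.eq, ← dotProduct_mulVec, h0, dotProduct_zero]
  have hmneg : ∀ θ ∈ Finset.univ.image hH.eigenvalues, E θ *ᵥ one ≠ 0 → E (-θ) *ᵥ one ≠ 0 := by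
    intro θ hθ h0 hc
    obtain ⟨h1, h2, h3⟩ := hE θ hθ
    have hw : Seidel A *ᵥ (E θ *ᵥ one) = (θ : ℂ) • (E θ *ᵥ one) := by
      rw [h3, mulVec_mulVec, h2]
    have h4 := horth _ (hneg θ hθ) hc _ (aux_seidel_conj A hA _ _ hw)
    rw [star_star] at h4
    apply h0
    apply aux_dot
    rw [star_mulVec, h1.eq, ← dotProduct_mulVec,
      mulVec_mulVec, h2, dotProduct_comm]
    have : star one = one := by ext; simp [hone]
    rw [this, h4]
  have habs_m : ∀ θ ∈ Finset.univ.image hH.eigenvalues, E θ *ᵥ one ≠ 0 → θ ^ 2 ≤ α ^ 2 := by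
    intro θ hθ h0
    have h1 := hα₂ θ hθ h0
    have h2 := hα₂ _ (hneg θ hθ) (hmneg θ hθ h0)
    exact sq_le_sq' (by linarith) h1
  have hle : ∀ θ ∈ Finset.univ.image hH.eigenvalues, θ ≤ γ := by
    intro θ hθ
    by_cases h0 : E θ *ᵥ one = 0
    · exact hγ₂ θ hθ h0
    · exact (hα₂ θ hθ h0).trans hαγ
  have habs : ∀ θ ∈ Finset.univ.image hH.eigenvalues, θ ^ 2 ≤ γ ^ 2 := by
    intro θ hθ
    exact sq_le_sq' (by linarith [hle _ (hneg θ hθ)]) (hle θ hθ)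
  have hag := habs α hα₁.1
  have hmem : ∀ i, hH.eigenvalues i ∈ Finset.univ.image hH.eigenvalues :=
    fun i => Finset.mem_image_of_mem _ (Finset.mem_univ i)
  -- norms
  have hN : ∀ x : Fin v → ℂ, ∑ i, ‖star (U i) ⬝ᵥ x‖ ^ 2 = ∑ j, ‖x j‖ ^ 2 := by
    intro x
    have h := hP x x
    have e : ∀ z : ℂ, star z * z = ((‖z‖ ^ 2 : ℝ) : ℂ) := by
      intro z
      have := Complex.conj_mul' z
      simpa using this
    simp only [dotProduct, Pi.star_apply, e] at h
    exact_mod_cast h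
  let χ : Fin v → ℂ := fun x => if x ∈ T then 1 else 0
  have hχ : ∑ i, ‖star (U i) ⬝ᵥ χ‖ ^ 2 = s := by
    rw [hN, ← hTcard]
    have : ∀ j, ‖χ j‖ ^ 2 = if j ∈ T then (1 : ℝ) else 0 := by
      intro j; by_cases h : j ∈ T <;> simp [χ, h]
    simp [this]
  have hone2 : ∑ i, ‖star (U i) ⬝ᵥ one‖ ^ 2 = v := by
    rw [hN]; simp [hone]
  let M : Finset (Fin v) := Finset.univ.filter (fun i => E (hH.eigenvalues i) *ᵥ one ≠ 0)
  have hoz : ∀ i, i ∉ M → star (U i) ⬝ᵥ one = 0 := by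
    intro i hi
    simp only [M, Finset.mem_filter, Finset.mem_univ, true_and, not_not] at hi
    exact horth _ (hmem i) hi _ (hU i)
  set m : ℝ := ∑ i ∈ M, ‖star (U i) ⬝ᵥ χ‖ ^ 2 with hm
  have hCS : (s : ℝ) ^ 2 ≤ v * m := by
    have h := hP one χ
    have h1 : star one ⬝ᵥ χ = (s : ℂ) := by
      simp [dotProduct, hone, χ, hTcard]
    have h2 : ∑ i, star (star (U i) ⬝ᵥ one) * (star (U i) ⬝ᵥ χ)
        = ∑ i ∈ M, star (star (U i) ⬝ᵥ one) * (star (U i) ⬝ᵥ χ) := by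
      symm
      apply Finset.sum_subset (Finset.subset_univ _)
      intro i _ hi
      rw [hoz i hi]; simp
    rw [h1, h2] at h
    have h3 : (s : ℝ) ≤ ∑ i ∈ M, ‖star (U i) ⬝ᵥ one‖ * ‖star (U i) ⬝ᵥ χ‖ := by
      calc (s : ℝ) = ‖(s : ℂ)‖ := by simp
        _ ≤ _ := by
          rw [← h]
          refine (norm_sum_le _ _).trans (le_of_eq ?_)
          refine Finset.sum_congr rfl fun i _ => ?_
          rw [norm_mul, norm_star]
    calc (s : ℝ) ^ 2 ≤ (∑ i ∈ M, ‖star (U i) ⬝ᵥ one‖ * ‖star (U i) ⬝ᵥ χ‖) ^ 2 := by gcongr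
      _ ≤ (∑ i ∈ M, ‖star (U i) ⬝ᵥ one‖ ^ 2) * m := Finset.sum_mul_sq_le_sq_mul_sq _ _ _
      _ ≤ v * m := by
        have : 0 ≤ m := Finset.sum_nonneg fun _ _ => by positivity
        gcongr
        rw [← hone2]
        exact Finset.sum_le_sum_of_subset_of_nonneg (Finset.subset_univ _) fun _ _ _ => by positivity
  have hup : ∑ i, ‖star (U i) ⬝ᵥ (Seidel A *ᵥ χ)‖ ^ 2 ≤ γ ^ 2 * s - (γ ^ 2 - α ^ 2) * m := by
    have hm' : m = ∑ i, if i ∈ M then ‖star (U i) ⬝ᵥ χ‖ ^ 2 else 0 := by simp [hm]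
    rw [← hχ, hm', Finset.mul_sum, Finset.mul_sum, ← Finset.sum_sub_distrib]
    refine Finset.sum_le_sum fun i _ => ?_
    rw [hUS, norm_mul, mul_pow, Complex.norm_real, Real.norm_eq_abs, sq_abs]
    split_ifs with hi
    · have := habs_m _ (hmem i) (by simpa [M] using hi)
      nlinarith [sq_nonneg ‖star (U i) ⬝ᵥ χ‖]
    · have := habs _ (hmem i)
      nlinarith [sq_nonneg ‖star (U i) ⬝ᵥ χ‖]
  have hlow : (s : ℝ) * ((s : ℝ) ^ 2 - 1) / 3 ≤ ∑ i, ‖star (U i) ⬝ᵥ (Seidel A *ᵥ χ)‖ ^ 2 := by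
    rw [hN, ← hTcard, ← aux_tour A hA T hT]
    refine le_trans (le_of_eq ?_)
      (Finset.sum_le_sum_of_subset_of_nonneg (Finset.subset_univ T) fun _ _ _ => by positivity)
    refine Finset.sum_congr rfl fun x _ => ?_
    have : (Seidel A *ᵥ χ) x = Complex.I * ∑ y ∈ T, (A x y - A y x) := by
      rw [Finset.mul_sum]; simp [mulVec, dotProduct, Seidel, χ]
    rw [this, norm_mul, Complex.norm_I, one_mul]
  apply aux_final _ _ _ _ (by exact_mod_cast hv) (by positivity) hag
  refine hlow.trans (hup.trans ?_)
  have hv' : (0 : ℝ) < v := by exact_mod_cast hv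
  have : (s : ℝ) ^ 2 / v ≤ m := by rw [div_le_iff₀ hv']; linarith
  have := mul_le_mul_of_nonneg_left this (sub_nonneg.2 hag)
  linarith
end

section
/- Let G be a regular digraph on v vertices containing a transitive subtournament of size s, and let θ_max be the maximum eigenvalue of the Seidel matrix S_G. Then s ≤ (−3θ_max² + √(9θ_max⁴ + 4v² + 12θ_max²v²))/(2v). -/
open Matrix Finset

/-- A regular digraph: `A 𝟙 = Aᵀ 𝟙 = k 𝟙` for some `k`. -/
def IsRegularDigraph {v : ℕ} (A : Matrix (Fin v) (Fin v) ℂ) : Prop :=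
  IsDigraph A ∧ ∃ k : ℕ,
    (A *ᵥ fun _ => 1) = (fun _ => (k : ℂ)) ∧ (Aᵀ *ᵥ fun _ => 1) = (fun _ => (k : ℂ))

lemma score_sum {v : ℕ} (A : Matrix (Fin v) (Fin v) ℂ) (hA : IsDigraph A)
    (T : Finset (Fin v)) (hT : IsTransSubtournament A T) :
    ∃ f : Fin v → ℕ, (∀ x ∈ T, ∑ y ∈ T, (A x y - A y x) = 2 * (f x : ℂ) - ((T.card : ℂ) - 1)) ∧
      T.image f = Finset.range T.card ∧ Set.InjOn f T := by
  classical
  obtain ⟨h1, h2⟩ := hT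
  obtain ⟨h01, h0⟩ := hA
  set f : Fin v → ℕ := fun x => (T.filter (fun y => A x y = 1)).card with hf
  have hinj' : ∀ x ∈ T, ∀ y ∈ T, A x y = 1 → f y < f x := by
    intro x hx y hy hxy
    apply Finset.card_lt_card
    rw [Finset.ssubset_iff_of_subset]
    · refine ⟨y, by simp [hy, hxy], by simp [h0]⟩
    · intro z hz
      simp only [Finset.mem_filter] at hz ⊢
      exact ⟨hz.1, h2 x hx y hy z hz.1 hxy hz.2⟩
  have hinj : Set.InjOn f T := by
    intro x hx y hy hxy
    by_contra hne
    rcases h1 x hx y hy hne with h | h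
    · have := hinj' x hx y hy h.1; omega
    · have := hinj' y hy x hx h.1; omega
  refine ⟨f, ?_, ?_, hinj⟩
  · intro x hx
    have e1 : ∑ y ∈ T, A x y = (f x : ℂ) := by
      rw [hf]
      simp only [Finset.card_filter, Nat.cast_sum]
      refine Finset.sum_congr rfl fun y _ => ?_
      rcases h01 x y with h | h <;> simp [h]
    have e2 : ∑ y ∈ T, (A x y + A y x) = (T.card : ℂ) - 1 := by
      have : ∀ y ∈ T, A x y + A y x = 1 - (if y = x then 1 else 0) := by
        intro y hy
        by_cases hyx : y = x
        · simp [hyx, h0]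
        · rcases h1 x hx y hy (Ne.symm hyx) with h | h
          · rcases h01 y x with h' | h'
            · simp [h.1, h', hyx]
            · exact absurd h' h.2
          · rcases h01 x y with h' | h'
            · simp [h.1, h', hyx]
            · exact absurd h' h.2
      rw [Finset.sum_congr rfl this, Finset.sum_sub_distrib]
      simp [hx]
    rw [Finset.sum_add_distrib, e1] at e2
    rw [Finset.sum_sub_distrib, e1, ← e2]; ring
  · apply Finset.eq_of_subset_of_card_le
    · intro n hn
      simp only [Finset.mem_image, Finset.mem_range] at hn ⊢
      obtain ⟨x, hx, rfl⟩ := hn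
      apply Finset.card_lt_card
      rw [Finset.ssubset_iff_of_subset (Finset.filter_subset _ _)]
      exact ⟨x, hx, by simp [h0]⟩
    · rw [Finset.card_image_of_injOn hinj, Finset.card_range]

lemma sum_sq_range (n : ℕ) (c : ℝ) : ∑ j ∈ Finset.range n, (2 * (j : ℝ) - c) ^ 2
    = (2 * n * (n - 1) * (2 * n - 1)) / 3 - 2 * c * (n * (n - 1)) + n * c ^ 2 := by
  induction n with
  | zero => simp
  | succ n ih => rw [Finset.sum_range_succ, ih]; push_cast; ring

lemma herm_inner {v : ℕ} (S : Matrix (Fin v) (Fin v) ℂ) (hH : S.IsHermitian)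
    (w : Fin v → ℂ) (i : Fin v) :
    inner ℂ (hH.eigenvectorBasis i) (WithLp.toLp 2 (S *ᵥ w)) =
      (hH.eigenvalues i : ℂ) * inner ℂ (hH.eigenvectorBasis i) (WithLp.toLp 2 w) := by
  have h := hH.mulVec_eigenvectorBasis i
  rw [EuclideanSpace.inner_eq_star_dotProduct, EuclideanSpace.inner_eq_star_dotProduct]
  simp only
  rw [dotProduct_comm, dotProduct_mulVec]
  have : star (⇑(hH.eigenvectorBasis i)) ᵥ* S
      = (hH.eigenvalues i : ℂ) • star (⇑(hH.eigenvectorBasis i)) := by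
    have h2 := congrArg star h
    rw [star_mulVec, hH.eq] at h2
    rw [h2]
    ext j
    simp
  rw [this, smul_dotProduct, dotProduct_comm, smul_eq_mul]

lemma eig_ge {v : ℕ} (A : Matrix (Fin v) (Fin v) ℂ) (hH : (Seidel A).IsHermitian) (θ : ℝ)
    (hθ : ∀ i, hH.eigenvalues i ≤ θ) (i : Fin v) : (hH.eigenvalues i) ^ 2 ≤ θ ^ 2 := by
  apply sq_le_sq'
  swap
  · exact hθ i
  set S := Seidel A with hS
  have hSt : Sᵀ = - S := by
    rw [hS, Seidel]; ext a b; simp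
    ring
  set w : Fin v → ℂ := star (⇑(hH.eigenvectorBasis i)) with hw
  have hSw : S *ᵥ w = (-(hH.eigenvalues i : ℂ)) • w := by
    have h2 := congrArg star (hH.mulVec_eigenvectorBasis i)
    rw [star_mulVec, hH.eq, ← mulVec_transpose, hSt, neg_mulVec] at h2
    rw [neg_smul, ← neg_eq_iff_eq_neg, h2]
    ext j
    simp [hw]
  by_contra hlt
  push Not at hlt
  have hz : ∀ j, inner ℂ (hH.eigenvectorBasis j) (WithLp.toLp 2 w) = 0 := by
    intro j
    have h3 := herm_inner S hH w j
    rw [hSw, WithLp.toLp_smul, inner_smul_right] at h3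
    have h4 : ((hH.eigenvalues j : ℂ) + hH.eigenvalues i) *
        inner ℂ (hH.eigenvectorBasis j) (WithLp.toLp 2 w) = 0 := by
      linear_combination -h3
    rcases mul_eq_zero.1 h4 with h | h
    · have : hH.eigenvalues j + hH.eigenvalues i = 0 := by exact_mod_cast h
      have := hθ j
      linarith
    · exact h
  have hsum := hH.eigenvectorBasis.sum_sq_norm_inner_right (WithLp.toLp 2 w)
  simp only [hz] at hsum
  have hn : ‖hH.eigenvectorBasis i‖ ^ 2 = ‖(WithLp.toLp 2 w : EuclideanSpace ℂ (Fin v))‖ ^ 2 := by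
    rw [EuclideanSpace.norm_sq_eq, EuclideanSpace.norm_sq_eq]
    simp [hw]
  rw [← hsum] at hn
  simp at hn

lemma norm_bound {v : ℕ} (A : Matrix (Fin v) (Fin v) ℂ) (hH : (Seidel A).IsHermitian) (θ : ℝ)
    (hθ : ∀ i, hH.eigenvalues i ≤ θ) (w : Fin v → ℂ) :
    ∑ x, ‖(Seidel A *ᵥ w) x‖ ^ 2 ≤ θ ^ 2 * ∑ x, ‖w x‖ ^ 2 := by
  have e1 := EuclideanSpace.norm_sq_eq (WithLp.toLp 2 (Seidel A *ᵥ w) : EuclideanSpace ℂ (Fin v))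
  have e2 := EuclideanSpace.norm_sq_eq (WithLp.toLp 2 w : EuclideanSpace ℂ (Fin v))
  simp only at e1 e2
  rw [← e1, ← e2, ← hH.eigenvectorBasis.sum_sq_norm_inner_right,
    ← hH.eigenvectorBasis.sum_sq_norm_inner_right, Finset.mul_sum]
  refine Finset.sum_le_sum fun i _ => ?_
  rw [herm_inner, norm_mul, mul_pow]
  refine mul_le_mul_of_nonneg_right ?_ (by positivity)
  rw [Complex.norm_real, Real.norm_eq_abs, sq_abs]
  exact eig_ge A hH θ hθ i

/-- Hoffman-type bound for regular digraphs: if a regular digraph on `v` vertices contains a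
transitive subtournament of size `s` and `θmax` is the maximum eigenvalue of its Seidel
matrix, then `s ≤ (−3 θmax² + √(9 θmax⁴ + 4v² + 12 θmax² v²))/(2v)`. -/
theorem hoffman_type_bound_regular_digraph
    {v s : ℕ} (A : Matrix (Fin v) (Fin v) ℂ) (hA : IsRegularDigraph A)
    (hH : (Seidel A).IsHermitian)
    (T : Finset (Fin v)) (hT : IsTransSubtournament A T) (hTcard : T.card = s)
    (θmax : ℝ)
    (hθ₁ : θmax ∈ Finset.univ.image hH.eigenvalues)
    (hθ₂ : ∀ i, hH.eigenvalues i ≤ θmax) :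
    (s : ℝ) ≤ (-3 * θmax ^ 2 +
      Real.sqrt (9 * θmax ^ 4 + 4 * (v : ℝ) ^ 2 + 12 * θmax ^ 2 * (v : ℝ) ^ 2)) /
        (2 * (v : ℝ)) := by
  classical
  have hv : 0 < v := by
    obtain ⟨i, -, -⟩ := Finset.mem_image.1 hθ₁
    exact i.pos
  have hvR : (0 : ℝ) < v := by exact_mod_cast hv
  obtain ⟨hD, k, hk1, hk2⟩ := hA
  obtain ⟨f, hf1, hf2, hf3⟩ := score_sum A hD T hT
  rw [hTcard] at hf1 hf2
  set c : ℝ := s / v with hc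
  set u : Fin v → ℂ := fun x => if x ∈ T then 1 else 0 with hu
  set w : Fin v → ℂ := fun x => (((if x ∈ T then 1 else 0) - c : ℝ) : ℂ) with hw
  have hwu : w = u - (c : ℂ) • (fun _ => 1) := by
    ext x; simp [hw, hu]
    split_ifs <;> simp
  have hSw : Seidel A *ᵥ w = Seidel A *ᵥ u := by
    rw [hwu, mulVec_sub, mulVec_smul, sub_eq_self]
    have : Seidel A *ᵥ (fun _ => 1) = 0 := by
      rw [Seidel, smul_mulVec, sub_mulVec, hk1, hk2]; simp
    rw [this, smul_zero]
  have hb := norm_bound A hH θmax hθ₂ w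
  have hl : ∑ j ∈ Finset.range s, (2 * (j : ℝ) - (s - 1)) ^ 2 ≤ ∑ x, ‖(Seidel A *ᵥ w) x‖ ^ 2 := by
    rw [← hf2, Finset.sum_image hf3]
    refine le_trans (le_of_eq ?_) (Finset.sum_le_univ_sum_of_nonneg (s := T) fun x => by positivity)
    refine Finset.sum_congr rfl fun x hx => ?_
    have : (Seidel A *ᵥ u) x = Complex.I * ((2 * (f x : ℝ) - (s - 1) : ℝ) : ℂ) := by
      push_cast
      rw [← hf1 x hx, Finset.mul_sum]
      simp [Seidel, mulVec, dotProduct, hu]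
    rw [hSw, this, norm_mul, Complex.norm_I, one_mul, Complex.norm_real, Real.norm_eq_abs, sq_abs]
  have hr : ∑ x, ‖w x‖ ^ 2 = s - 2 * c * s + v * c ^ 2 := by
    have : ∀ x, ‖w x‖ ^ 2 = (if x ∈ T then 1 else 0) - 2 * c * (if x ∈ T then 1 else 0) + c ^ 2 := by
      intro x
      simp only [hw]
      rw [Complex.norm_real, Real.norm_eq_abs, sq_abs]
      split_ifs <;> ring
    simp only [this]
    rw [Finset.sum_add_distrib, Finset.sum_sub_distrib, ← Finset.mul_sum]
    simp [hTcard]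
  rw [sum_sq_range] at hl
  rw [hr] at hb
  have hcv : c * v = s := by rw [hc]; field_simp
  have key : (s : ℝ) * (v * (s ^ 2 - 1)) ≤ s * (3 * θmax ^ 2 * (v - s)) := by
    have h := mul_le_mul_of_nonneg_right (hl.trans hb) hvR.le
    have e : (s - 2 * c * s + v * c ^ 2) * v = s * (v - s) := by
      rw [← hcv]; ring
    rw [mul_assoc (θmax ^ 2), e] at h
    nlinarith [h]
  have key2 : (v : ℝ) * (s ^ 2 - 1) ≤ 3 * θmax ^ 2 * (v - s) := by
    rcases Nat.eq_zero_or_pos s with h0 | h0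
    · simp only [h0, Nat.cast_zero]
      nlinarith [mul_nonneg (sq_nonneg θmax) hvR.le]
    · exact le_of_mul_le_mul_left key (by exact_mod_cast h0)
  rw [le_div_iff₀ (by positivity)]
  have : 2 * (v : ℝ) * s + 3 * θmax ^ 2 ≤
      Real.sqrt (9 * θmax ^ 4 + 4 * (v : ℝ) ^ 2 + 12 * θmax ^ 2 * (v : ℝ) ^ 2) := by
    apply Real.le_sqrt_of_sq_le
    nlinarith [mul_le_mul_of_nonneg_left key2 hvR.le]
  linarith
end

section
/- Let G be a doubly regular tournament on v vertices containing a transitive subtournament of size s. Then s ≤ (−3 + √(13 + 12v))/2. -/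
open Matrix Finset

lemma drt_range_sum (s : ℕ) : ∑ i ∈ Finset.range s, (i : ℝ) = s * (s - 1) / 2 := by
  induction s with
  | zero => simp
  | succ n ih => rw [Finset.sum_range_succ, ih]; push_cast; ring

lemma drt_range_sum_sq (s : ℕ) :
    ∑ i ∈ Finset.range s, (i : ℝ) ^ 2 = s * (s - 1) * (2 * s - 1) / 6 := by
  induction s with
  | zero => simp
  | succ n ih => rw [Finset.sum_range_succ, ih]; push_cast; ring

lemma drt_range_sum_tot (s : ℕ) :
    ∑ i ∈ Finset.range s, (2 * (i : ℝ) - (s - 1)) ^ 2 = (s : ℝ) * ((s : ℝ) ^ 2 - 1) / 3 := by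
  have : ∀ i ∈ Finset.range s, (2 * (i : ℝ) - (s - 1)) ^ 2
      = 4 * (i : ℝ) ^ 2 - 4 * (s - 1) * (i : ℝ) + (s - 1) ^ 2 := by intro i _; ring
  rw [Finset.sum_congr rfl this, Finset.sum_add_distrib, Finset.sum_sub_distrib,
    ← Finset.mul_sum, ← Finset.mul_sum, drt_range_sum, drt_range_sum_sq]
  simp
  ring

/-- If a doubly regular tournament on `v` vertices contains a transitive subtournament of
size `s`, then `s ≤ (−3 + √(13 + 12v))/2`. -/
theorem hoffman_type_bound_doubly_regular_tournament
    {v s : ℕ} (A : Matrix (Fin v) (Fin v) ℂ) (hA : IsDRT A)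
    (T : Finset (Fin v)) (hT : IsTransSubtournament A T) (hTcard : T.card = s) :
    (s : ℝ) ≤ (-3 + Real.sqrt (13 + 12 * (v : ℝ))) / 2 := by
  classical
  obtain ⟨⟨⟨h01, hdiag⟩, htour⟩, hv, hk, hl⟩ := hA
  obtain ⟨-, htr⟩ := hT
  set B : Fin v → Fin v → ℝ := fun x y => if A x y = 1 then 1 else 0 with hB
  have hBd : ∀ x, B x x = 0 := by intro x; simp [hB, hdiag]
  have hBsum : ∀ x y, x ≠ y → B x y + B y x = 1 := by
    intro x y hxy
    have h := congrFun (congrFun htour x) y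
    simp [Matrix.one_apply, hxy] at h
    rcases h01 x y with h1 | h1 <;> rcases h01 y x with h2 | h2 <;>
      simp [h1, h2] at h <;> simp [hB, h1, h2]
  have hBsq : ∀ x y, B x y * B x y = B x y := by
    intro x y; simp only [hB]; split_ifs <;> simp
  have hkR : ∀ x, ∑ y, B x y = ((v : ℝ) - 1) / 2 := by
    intro x
    have h1 : ∑ y, B x y = ((univ.filter fun y => A x y = 1).card : ℝ) := by
      simp [hB]
    rw [h1, hk x]
    obtain ⟨m, rfl⟩ : ∃ m, v = 4 * m + 3 := ⟨v / 4, by omega⟩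
    have : (4 * m + 3 - 1) / 2 = 2 * m + 1 := by omega
    rw [this]; push_cast; ring
  have hlR : ∀ x y, x ≠ y → ∑ z, B x z * B y z = ((v : ℝ) - 3) / 4 := by
    intro x y hxy
    have h1 : ∑ z, B x z * B y z
        = ((univ.filter fun z => A x z = 1 ∧ A y z = 1).card : ℝ) := by
      rw [Finset.card_filter]; push_cast
      refine Finset.sum_congr rfl fun z _ => ?_
      by_cases h1 : A x z = 1 <;> by_cases h2 : A y z = 1 <;> simp [hB, h1, h2]
    rw [h1, hl x y hxy]
    obtain ⟨m, rfl⟩ : ∃ m, v = 4 * m + 3 := ⟨v / 4, by omega⟩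
    have : (4 * m + 3 - 3) / 4 = m := by omega
    rw [this]; push_cast; ring
  set S : Fin v → Fin v → ℝ := fun x y => 2 * B x y - 1 + (if x = y then 1 else 0) with hS
  have hskew : ∀ x y, S x y = - S y x := by
    intro x y
    by_cases hxy : x = y
    · subst hxy; simp [hS, hBd]
    · have := hBsum x y hxy
      simp only [hS, if_neg hxy, if_neg (Ne.symm hxy)]; linarith
  have hgram : ∀ t t', ∑ x, S t x * S t' x = (if t = t' then (v : ℝ) else 0) - 1 := by
    intro t t'
    have hexp : ∀ x, S t x * S t' x = 4 * (B t x * B t' x) - 2 * B t x - 2 * B t' x + 1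
        + (if t = x then (2 * B t' x - 1 + (if t' = x then 1 else 0)) else 0)
        + (if t' = x then (2 * B t x - 1) else 0) := by
      intro x; simp only [hS]; split_ifs <;> ring
    rw [Finset.sum_congr rfl fun x _ => hexp x]
    simp only [Finset.sum_add_distrib, Finset.sum_sub_distrib, ← Finset.mul_sum,
      Finset.sum_ite_eq, Finset.mem_univ, if_true, hkR]
    by_cases h : t = t'
    · subst h
      simp only [hBsq, hkR, hBd]; simp; ring
    · have := hBsum t t' h
      rw [hlR t t' h]
      simp [h, Ne.symm h]; linarith
  have htotal : ∑ x, (∑ t ∈ T, S x t) ^ 2 = (v : ℝ) * s - s ^ 2 := by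
    have h1 : ∀ x, (∑ t ∈ T, S x t) ^ 2 = ∑ t ∈ T, ∑ t' ∈ T, S t x * S t' x := by
      intro x
      rw [sq, Finset.sum_mul_sum]
      refine Finset.sum_congr rfl fun t _ => Finset.sum_congr rfl fun t' _ => ?_
      rw [hskew x t, hskew x t']; ring
    rw [Finset.sum_congr rfl fun x _ => h1 x, Finset.sum_comm]
    have h2 : ∀ t ∈ T, ∑ x, ∑ t' ∈ T, S t x * S t' x = (v : ℝ) - s := by
      intro t ht
      rw [Finset.sum_comm]
      simp only [hgram, Finset.sum_sub_distrib, Finset.sum_ite_eq, ht, if_true]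
      simp [hTcard]
    rw [Finset.sum_congr rfl h2]
    simp [hTcard]; ring
  have hle : ∑ x ∈ T, (∑ t ∈ T, S x t) ^ 2 ≤ ∑ x, (∑ t ∈ T, S x t) ^ 2 :=
    Finset.sum_le_sum_of_subset_of_nonneg (Finset.subset_univ _) fun _ _ _ => sq_nonneg _
  set d : Fin v → ℕ := fun x => (T.filter fun y => A x y = 1).card with hd
  have hrow : ∀ x ∈ T, ∑ t ∈ T, S x t = 2 * (d x : ℝ) - (s - 1) := by
    intro x hx
    simp only [hS, Finset.sum_add_distrib, Finset.sum_sub_distrib, ← Finset.mul_sum,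
      Finset.sum_ite_eq, hx, if_true]
    simp [hB, hd, hTcard]; ring
  have hdlt : ∀ x ∈ T, ∀ y ∈ T, A x y = 1 → d y < d x := by
    intro x hx y hy hxy
    apply Finset.card_lt_card
    rw [Finset.ssubset_iff_of_subset]
    · exact ⟨y, by simp [hy, hxy], by simp [hdiag]⟩
    · intro z hz
      simp only [Finset.mem_filter] at hz ⊢
      exact ⟨hz.1, htr x hx y hy z hz.1 hxy hz.2⟩
  have hinj : Set.InjOn d T := by
    intro x hx y hy hxy
    by_contra hne
    have h := hBsum x y hne
    by_cases h1 : A x y = 1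
    · have := hdlt x hx y hy h1; omega
    · by_cases h2 : A y x = 1
      · have := hdlt y hy x hx h2; omega
      · simp [hB, h1, h2] at h
  have himg : T.image d = Finset.range s := by
    apply Finset.eq_of_subset_of_card_le
    · intro i hi
      obtain ⟨x, hx, rfl⟩ := Finset.mem_image.1 hi
      rw [Finset.mem_range, ← hTcard]
      apply Finset.card_lt_card
      rw [Finset.ssubset_iff_of_subset (Finset.filter_subset _ _)]
      exact ⟨x, hx, by simp [hdiag]⟩
    · rw [Finset.card_image_of_injOn hinj, hTcard, Finset.card_range]
  have hsumT : ∑ x ∈ T, (∑ t ∈ T, S x t) ^ 2 = s * ((s : ℝ) ^ 2 - 1) / 3 := by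
    rw [Finset.sum_congr rfl fun x hx => by rw [hrow x hx], ← drt_range_sum_tot, ← himg,
      Finset.sum_image hinj]
  rw [hsumT, htotal] at hle
  have hv0 : (0 : ℝ) ≤ v := Nat.cast_nonneg v
  have key : (2 * (s : ℝ) + 3) ^ 2 ≤ 13 + 12 * v := by
    rcases Nat.eq_zero_or_pos s with h0 | hpos
    · subst h0; push_cast; nlinarith
    · have hp : (0 : ℝ) < s := by exact_mod_cast hpos
      have : (s : ℝ) * ((s : ℝ) ^ 2 - 1 + 3 * s) ≤ s * (3 * v) := by nlinarith
      have := le_of_mul_le_mul_left this hp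
      nlinarith
  have := Real.le_sqrt_of_sq_le key
  linarith
end

section
/- Let G be a doubly regular tournament on v vertices with Seidel matrix S_G = i(A − Aᵀ). Then the eigenvalues of S_G are 0 with multiplicity 1, √v with multiplicity (v−1)/2, and −√v with multiplicity (v−1)/2. -/
open Matrix Finset

lemma drt_count {v : ℕ} (f : Fin v → ℝ) (hv : v % 4 = 3)
    (h3 : ∀ i, f i ^ 3 = v * f i) (h1 : ∑ i, f i = 0) (h2 : ∑ i, f i ^ 2 = v * (v - 1)) :
    (univ.filter fun i => f i = 0).card = 1 ∧
    (univ.filter fun i => f i = Real.sqrt v).card = (v - 1) / 2 ∧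
    (univ.filter fun i => f i = -Real.sqrt v).card = (v - 1) / 2 := by
  have hv0 : (0 : ℝ) < v := by
    have : 0 < v := by omega
    exact_mod_cast this
  set s := Real.sqrt v with hs
  have hs0 : 0 < s := Real.sqrt_pos.mpr hv0
  have hss : s ^ 2 = v := Real.sq_sqrt hv0.le
  have hcase : ∀ i, f i = 0 ∨ f i = s ∨ f i = -s := by
    intro i
    have : f i * ((f i - s) * (f i + s)) = 0 := by
      have := h3 i
      rw [← hss] at this
      linear_combination this
    rcases mul_eq_zero.mp this with h | h
    · exact Or.inl h
    · rcases mul_eq_zero.mp h with h | h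
      · right; left; linarith
      · right; right; linarith
  set a := (univ.filter fun i => f i = 0).card with ha
  set b := (univ.filter fun i => f i = s).card with hb
  set c := (univ.filter fun i => f i = -s).card with hc
  have ea : (a : ℝ) = ∑ i, if f i = 0 then (1 : ℝ) else 0 := by simp [ha]
  have eb : (b : ℝ) = ∑ i, if f i = s then (1 : ℝ) else 0 := by simp [hb]
  have ec : (c : ℝ) = ∑ i, if f i = -s then (1 : ℝ) else 0 := by simp [hc]
  have n1 : s ≠ 0 := hs0.ne'
  have n2 : -s ≠ 0 := by linarith
  have n3 : s ≠ -s := by intro h; linarith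
  have e0 : (a : ℝ) + b + c = v := by
    rw [ea, eb, ec, ← sum_add_distrib, ← sum_add_distrib]
    have : (v : ℝ) = ∑ i : Fin v, (1 : ℝ) := by simp
    rw [this]
    refine sum_congr rfl fun i _ => ?_
    rcases hcase i with h | h | h <;> simp [h, n1, n1.symm, n3, n3.symm]
  have e1 : s * b - s * c = 0 := by
    rw [← h1, eb, ec, mul_sum, mul_sum, ← sum_sub_distrib]
    refine sum_congr rfl fun i _ => ?_
    rcases hcase i with h | h | h <;> simp [h, n1, n1.symm, n3, n3.symm]
  have e2 : s ^ 2 * b + s ^ 2 * c = v * (v - 1) := by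
    rw [← h2, eb, ec, mul_sum, mul_sum, ← sum_add_distrib]
    refine sum_congr rfl fun i _ => ?_
    rcases hcase i with h | h | h <;> simp [h, n1, n1.symm, n3, n3.symm]
  have hbc : (b : ℝ) = c := by
    have : s * ((b : ℝ) - c) = 0 := by linarith
    rcases mul_eq_zero.mp this with h | h
    · exact absurd h n1
    · linarith
  have hsum : (b : ℝ) + c = v - 1 := by
    rw [hss] at e2
    apply mul_left_cancel₀ hv0.ne'
    linarith
  have ha1 : (a : ℝ) = 1 := by linarith
  have hbc' : b = c := by exact_mod_cast hbc
  have ha1' : a = 1 := by exact_mod_cast ha1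
  have e0' : a + b + c = v := by exact_mod_cast e0
  omega

lemma drt_sq {v : ℕ} (A : Matrix (Fin v) (Fin v) ℂ) (hA : IsDRT A) :
    Seidel A * Seidel A = (v : ℂ) • 1 - Matrix.of (fun _ _ => 1) ∧
    Seidel A * Matrix.of (fun _ _ => 1) = 0 := by
  obtain ⟨⟨⟨h01, hd⟩, hT⟩, hv, hk, hl⟩ := hA
  obtain ⟨m, hm⟩ : ∃ m, v = 4 * m + 3 := ⟨v / 4, by omega⟩
  have hk' : ∀ x, ∑ y, A x y = 2 * m + 1 := by
    intro x
    have h := hk x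
    have : (v - 1) / 2 = 2 * m + 1 := by omega
    rw [this] at h
    have h' : ((univ.filter fun y => A x y = 1).card : ℂ) = 2 * m + 1 := by
      rw [h]; push_cast; ring
    rw [← h', card_filter, Nat.cast_sum]
    refine sum_congr rfl fun y _ => ?_
    rcases h01 x y with h | h <;> simp [h]
  have hl' : ∀ x y, x ≠ y → ∑ z, A x z * A y z = m := by
    intro x y hxy
    have h := hl x y hxy
    have : (v - 3) / 4 = m := by omega
    rw [this] at h
    rw [← h, card_filter, Nat.cast_sum]
    refine sum_congr rfl fun z _ => ?_
    rcases h01 x z with h | h <;> rcases h01 y z with h' | h' <;> simp [h, h']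
  set J : Matrix (Fin v) (Fin v) ℂ := Matrix.of (fun _ _ => 1) with hJ
  have hAJ : A * J = (2 * m + 1 : ℂ) • J := by
    ext x y
    simp [hJ, Matrix.mul_apply, hk']
  have hJJ : J * J = (4 * m + 3 : ℂ) • J := by
    ext x y
    simp [hJ, Matrix.mul_apply, hm]
  have hAt : Aᵀ = J - 1 - A := by rw [← hT]; abel
  have hJAt : J * Aᵀ = (2 * m + 1 : ℂ) • J := by
    ext x y
    simp [hJ, Matrix.mul_apply, hk']
  have hJA : J * A = (2 * m + 1 : ℂ) • J := by
    rw [hAt, mul_sub, mul_sub, hJJ, mul_one] at hJAt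
    have : J * A = (4 * m + 3 : ℂ) • J - J - (2 * m + 1 : ℂ) • J := by
      rw [← hJAt]; abel
    rw [this]; module
  have hAAt : A * Aᵀ = (m + 1 : ℂ) • 1 + (m : ℂ) • J := by
    ext x y
    by_cases hxy : x = y
    · subst hxy
      have : ∑ z, A x z * A x z = 2 * m + 1 := by
        rw [← hk' x]
        refine sum_congr rfl fun z _ => ?_
        rcases h01 x z with h | h <;> simp [h]
      simp [hJ, Matrix.mul_apply, this]; ring
    · simp [hJ, Matrix.mul_apply, hl' x y hxy, hxy]
  have hAA : A * A = (m + 1 : ℂ) • J - A - (m + 1 : ℂ) • 1 := by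
    rw [hAt, mul_sub, mul_sub, hAJ, mul_one] at hAAt
    have : A * A = (2 * m + 1 : ℂ) • J - A - ((m + 1 : ℂ) • 1 + (m : ℂ) • J) := by
      rw [← hAAt]; abel
    rw [this]; module
  have hvc : (v : ℂ) = 4 * m + 3 := by rw [hm]; push_cast; ring
  have hS : Seidel A = Complex.I • (A - (J - 1 - A)) := by rw [Seidel, hAt]
  constructor
  · rw [hS, smul_mul_smul_comm, Complex.I_mul_I, hvc]
    simp only [mul_sub, sub_mul, hAA, hAJ, hJA, hJJ, mul_one, one_mul]
    module
  · rw [hS, smul_mul_assoc]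
    simp only [sub_mul, hAJ, hJJ, one_mul]
    module

/-- The Seidel matrix of a doubly regular tournament on `v` vertices has eigenvalue `0`
with multiplicity `1` and eigenvalues `±√v` each with multiplicity `(v-1)/2`. -/
theorem seidel_eigenvalues_doubly_regular_tournament
    {v : ℕ} (A : Matrix (Fin v) (Fin v) ℂ) (hA : IsDRT A)
    (hH : (Seidel A).IsHermitian) :
    (univ.filter fun i => hH.eigenvalues i = 0).card = 1 ∧
    (univ.filter fun i => hH.eigenvalues i = Real.sqrt v).card = (v - 1) / 2 ∧
    (univ.filter fun i => hH.eigenvalues i = -Real.sqrt v).card = (v - 1) / 2 := by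
  obtain ⟨hsq, hSJ⟩ := drt_sq A hA
  have hv := hA.2.1
  have hcube : Seidel A * (Seidel A * Seidel A) = (v : ℂ) • Seidel A := by
    rw [hsq, mul_sub, hSJ, mul_smul_comm, mul_one, sub_zero]
  have htr1 : (Seidel A).trace = 0 := by
    simp [Seidel, Matrix.trace_sub]
  have htr2 : (Seidel A * Seidel A).trace = v * (v - 1) := by
    rw [hsq]
    simp [Matrix.trace_sub, Matrix.trace]
    ring
  set D : Matrix (Fin v) (Fin v) ℂ := diagonal (RCLike.ofReal ∘ hH.eigenvalues) with hD
  set φ := Unitary.conjStarAlgAut ℂ (Matrix (Fin v) (Fin v) ℂ) hH.eigenvectorUnitary with hφ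
  have hsp : Seidel A = φ D := hH.spectral_theorem
  have htrφ : ∀ X, (φ X).trace = X.trace := by
    intro X
    rw [hφ, Unitary.conjStarAlgAut_apply, Matrix.trace_mul_cycle]
    simp
  have hD3 : D * (D * D) = (v : ℂ) • D := by
    apply EquivLike.injective φ
    rw [map_mul, map_mul, map_smul, ← hsp, hcube]
  have hD1 : D.trace = 0 := by rw [← htrφ, ← hsp, htr1]
  have hD2 : (D * D).trace = v * (v - 1) := by rw [← htrφ, map_mul, ← hsp, htr2]
  apply drt_count _ hv
  · intro i
    have := congrFun (congrFun hD3 i) i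
    simp [hD, Matrix.diagonal_mul_diagonal] at this
    have h' : (hH.eigenvalues i * (hH.eigenvalues i * hH.eigenvalues i) : ℝ)
        = v * hH.eigenvalues i := by exact_mod_cast this
    linarith [h']
  · simp [hD, Matrix.trace] at hD1
    exact_mod_cast hD1
  · simp [hD, Matrix.trace, Matrix.diagonal_mul_diagonal] at hD2
    simp only [pow_two]
    exact_mod_cast hD2
end

section
/- Let G be a doubly regular tournament on v = 4m−1 vertices (m ≥ 1), let Γ be a transitive subtournament of size s in G, and for 0 ≤ i ≤ s let n_i be the number of vertices q ∈ V(G)∖V(Γ) such that exactly i vertices of Γ dominate q. Then: (j=0) ∑_{i=0}^{s} n_i = v − s; (j=1) ∑_{i=0}^{s} i·n_i = s·((2m−1) − (s−1)/2); and (j=2) ∑_{i=0}^{s} C(i,2)·n_i = C(s,2)·((m−1) − (s−2)/3). -/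
open Matrix Finset

/-- In a doubly regular tournament on `v = 4m-1` vertices with a transitive subtournament
`Γ` of size `s`, letting `n i` be the number of vertices outside `Γ` dominated by exactly
`i` vertices of `Γ`, one has `∑ n_i = v - s`, `∑ i n_i = s((2m-1) - (s-1)/2)` and
`∑ C(i,2) n_i = C(s,2)((m-1) - (s-2)/3)`. -/
theorem intersection_numbers_doubly_regular_tournament
    {m s : ℕ} (hm : 1 ≤ m)
    (A : Matrix (Fin (4 * m - 1)) (Fin (4 * m - 1)) ℂ) (hA : IsDRT A)
    (T : Finset (Fin (4 * m - 1))) (hT : IsTransSubtournament A T) (hTcard : T.card = s)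
    (n : ℕ → ℕ)
    (hn : ∀ i, n i =
      ((univ \ T).filter fun q => (T.filter fun a => A a q = 1).card = i).card) :
    (∑ i ∈ Finset.range (s + 1), (n i : ℝ)) = (4 * (m : ℝ) - 1) - (s : ℝ) ∧
    (∑ i ∈ Finset.range (s + 1), (i : ℝ) * (n i : ℝ)) =
      (s : ℝ) * ((2 * (m : ℝ) - 1) - ((s : ℝ) - 1) / 2) ∧
    (∑ i ∈ Finset.range (s + 1), (Nat.choose i 2 : ℝ) * (n i : ℝ)) =
      (Nat.choose s 2 : ℝ) * (((m : ℝ) - 1) - ((s : ℝ) - 2) / 3) := by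
  obtain ⟨⟨⟨h01, hdiag⟩, -⟩, -, hk, hl⟩ := hA
  obtain ⟨hx, htr⟩ := hT
  set d : Fin (4 * m - 1) → ℕ := fun q => (T.filter fun a => A a q = 1).card with hd
  have hlt : ∀ x ∈ T, ∀ y ∈ T, A x y = 1 → d x < d y := by
    intro x hxT y hyT hxy
    apply Finset.card_lt_card
    rw [Finset.ssubset_iff_of_subset]
    · exact ⟨x, by simp [hxT, hxy], by simp [hdiag]⟩
    · intro a ha
      simp only [Finset.mem_filter] at ha ⊢
      exact ⟨ha.1, htr a ha.1 x hxT y hyT ha.2 hxy⟩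
  have hinj : Set.InjOn d (T : Set (Fin (4 * m - 1))) := by
    intro x hxT y hyT hxy
    by_contra hne
    rcases hx x hxT y hyT hne with h | h
    · exact absurd hxy (hlt x hxT y hyT h.1).ne
    · exact absurd hxy (hlt y hyT x hxT h.1).ne'
  have himg : T.image d = Finset.range s := by
    apply Finset.eq_of_subset_of_card_le
    · intro i hi
      obtain ⟨q, hq, rfl⟩ := Finset.mem_image.1 hi
      rw [Finset.mem_range, ← hTcard]
      apply Finset.card_lt_card
      rw [Finset.ssubset_iff_of_subset (Finset.filter_subset _ _)]
      exact ⟨q, hq, by simp [hdiag]⟩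
    · rw [Finset.card_image_of_injOn hinj, Finset.card_range, hTcard]
  have hsumT : ∀ f : ℕ → ℝ, ∑ q ∈ T, f (d q) = ∑ i ∈ Finset.range s, f i := by
    intro f
    rw [← himg, Finset.sum_image hinj]
  have hgen : ∀ f : ℕ → ℝ, ∑ i ∈ Finset.range (s + 1), f i * (n i : ℝ) =
      ∑ q, f (d q) - ∑ i ∈ Finset.range s, f i := by
    intro f
    rw [← hsumT, eq_sub_iff_add_eq, ← Finset.sum_sdiff (Finset.subset_univ T)]
    congr 1
    have hmap : ∀ q ∈ (univ \ T : Finset (Fin (4 * m - 1))), d q ∈ Finset.range (s + 1) := by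
      intro q _
      rw [Finset.mem_range, ← hTcard]
      exact Nat.lt_succ_of_le (Finset.card_filter_le _ _)
    rw [← Finset.sum_fiberwise_of_maps_to hmap]
    apply Finset.sum_congr rfl
    intro i _
    rw [Finset.sum_congr rfl (g := fun _ => f i)
      (fun q hq => by rw [(Finset.mem_filter.1 hq).2])]
    rw [Finset.sum_const, nsmul_eq_mul, mul_comm, hn i]
  have hdq : ∀ q, (d q : ℝ) = ∑ a ∈ T, if A a q = 1 then (1 : ℝ) else 0 := by
    intro q
    simp [hd]
  have hS1 : ∑ q, (d q : ℝ) = s * (2 * m - 1) := by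
    simp_rw [hdq]
    rw [Finset.sum_comm]
    rw [Finset.sum_congr rfl (g := fun _ => (2 * m - 1 : ℝ))]
    · rw [Finset.sum_const, hTcard, nsmul_eq_mul]
    · intro a _
      rw [Finset.sum_boole, hk a, show (4 * m - 1 - 1) / 2 = 2 * m - 1 by omega,
        Nat.cast_sub (by omega)]
      push_cast; ring
  have hS2 : ∑ q, (d q : ℝ) * (d q : ℝ) = s * (2 * m - 1) + s * (s - 1) * (m - 1) := by
    simp_rw [hdq, Finset.sum_mul_sum]
    rw [Finset.sum_comm]
    rw [Finset.sum_congr rfl (g := fun _ => (2 * m - 1 + (s - 1) * (m - 1) : ℝ))]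
    · rw [Finset.sum_const, hTcard, nsmul_eq_mul]; ring
    · intro a ha
      rw [Finset.sum_comm, ← Finset.add_sum_erase _ _ ha]
      congr 1
      · rw [Finset.sum_congr rfl (g := fun q => if A a q = 1 then (1 : ℝ) else 0)
          (fun q _ => by split_ifs <;> simp)]
        rw [Finset.sum_boole, hk a, show (4 * m - 1 - 1) / 2 = 2 * m - 1 by omega,
          Nat.cast_sub (by omega)]
        push_cast; ring
      · rw [Finset.sum_congr rfl (g := fun _ => (m - 1 : ℝ))]
        · rw [Finset.sum_const, Finset.card_erase_of_mem ha, hTcard, nsmul_eq_mul,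
            Nat.cast_sub (by rw [← hTcard]; exact Finset.card_pos.2 ⟨a, ha⟩)]
          push_cast; ring
        · intro b hb
          rw [Finset.sum_congr rfl (g := fun q => if A a q = 1 ∧ A b q = 1 then (1 : ℝ) else 0)
            (fun q _ => by by_cases h1 : A a q = 1 <;> by_cases h2 : A b q = 1 <;> simp [h1, h2])]
          rw [Finset.sum_boole, hl a b (Finset.ne_of_mem_erase hb).symm,
            show (4 * m - 1 - 3) / 4 = m - 1 by omega, Nat.cast_sub hm]
          push_cast; ring
  have hr1 : ∀ t : ℕ, ∑ i ∈ Finset.range t, (i : ℝ) = t * (t - 1) / 2 := by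
    intro t
    induction t with
    | zero => simp
    | succ t ih => rw [Finset.sum_range_succ, ih]; push_cast; ring
  have hr2 : ∀ t : ℕ, ∑ i ∈ Finset.range t, (Nat.choose i 2 : ℝ) =
      t * (t - 1) * (t - 2) / 6 := by
    intro t
    induction t with
    | zero => simp
    | succ t ih => rw [Finset.sum_range_succ, ih, Nat.cast_choose_two]; push_cast; ring
  refine ⟨?_, ?_, ?_⟩
  · have h := hgen (fun _ => 1)
    simp only [one_mul] at h
    rw [h]
    simp only [Finset.sum_const, Finset.card_univ, Fintype.card_fin, Finset.card_range,
      nsmul_eq_mul, mul_one]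
    rw [Nat.cast_sub (by omega)]
    push_cast; ring
  · rw [hgen (fun i => (i : ℝ)), hS1, hr1]; ring
  · rw [hgen (fun i => (Nat.choose i 2 : ℝ)), hr2]
    have : ∑ q, (Nat.choose (d q) 2 : ℝ) = (∑ q, (d q : ℝ) * (d q : ℝ) - ∑ q, (d q : ℝ)) / 2 := by
      rw [← Finset.sum_sub_distrib, Finset.sum_div]
      apply Finset.sum_congr rfl
      intro q _
      rw [Nat.cast_choose_two]; ring
    rw [this, hS1, hS2, Nat.cast_choose_two]; ring
end

section
/- Let G be a doubly regular tournament on v = 4m−1 vertices (m ≥ 1). Define the adjacency polynomial C(x,y) = x(x+1)(4m−1−y) − 2xy(2m − (y+1)/2) + y(y−1)(m − (y+1)/3). If G contains a transitive subtournament of size s, then C(b,s) ≥ 0 for every integer b. -/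
open Matrix Finset

/-- The adjacency polynomial of a doubly regular tournament on `4m-1` vertices:
`C(x,y) = x(x+1)(4m-1-y) - 2xy(2m-(y+1)/2) + y(y-1)(m-(y+1)/3)`. -/
noncomputable def adjPoly (m : ℕ) (x y : ℝ) : ℝ :=
  x * (x + 1) * (4 * m - 1 - y) - 2 * x * y * (2 * m - (y + 1) / 2) +
    y * (y - 1) * (m - (y + 1) / 3)

lemma aux_range (b : ℝ) (s : ℕ) : ∑ i ∈ range s, ((b - i) * (b - i + 1)) =
    s * (b * (b + 1)) - b * s * (s - 1) + s * (s - 1) * (s - 2) / 3 := by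
  induction s with
  | zero => simp
  | succ n ih => rw [sum_range_succ, ih]; push_cast; ring

open Classical in
lemma aux_trans {V : Type*} (R : V → V → Prop) (T : Finset V)
    (hirr : ∀ x, ¬ R x x)
    (htot : ∀ x ∈ T, ∀ y ∈ T, x ≠ y → R x y ∨ R y x)
    (htr : ∀ x ∈ T, ∀ y ∈ T, ∀ z ∈ T, R x y → R y z → R x z) (f : ℕ → ℝ) :
    ∑ z ∈ T, f (T.filter fun x => R x z).card = ∑ i ∈ range T.card, f i := by
  have hlt : ∀ x ∈ T, ∀ z ∈ T, R x z →
      (T.filter fun y => R y x).card < (T.filter fun y => R y z).card := by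
    intro x hx z hz h
    apply card_lt_card
    rw [Finset.ssubset_iff_of_subset]
    · exact ⟨x, by simp [hx, h], by simp [hirr]⟩
    · intro y hy
      simp only [mem_filter] at hy ⊢
      exact ⟨hy.1, htr y hy.1 x hx z hz hy.2 h⟩
  have hinj : Set.InjOn (fun z => (T.filter fun x => R x z).card) (T : Set V) := by
    intro x hx z hz h
    by_contra hne
    rcases htot x hx z hz hne with h1 | h1
    · exact absurd h (hlt x hx z hz h1).ne
    · exact absurd h (hlt z hz x hx h1).ne'
  have himg : T.image (fun z => (T.filter fun x => R x z).card) = range T.card := by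
    apply eq_of_subset_of_card_le
    · intro k hk
      obtain ⟨z, hz, rfl⟩ := mem_image.1 hk
      rw [mem_range]
      apply card_lt_card
      rw [Finset.ssubset_iff_of_subset (filter_subset _ _)]
      exact ⟨z, hz, by simp [hirr]⟩
    · rw [card_range, card_image_of_injOn hinj]
  rw [← himg, sum_image hinj]

open Classical in
lemma aux_main_s15 {V : Type*} [Fintype V] (R : V → V → Prop) (T : Finset V) (k l : ℝ)
    (hk : ∀ x, ((univ.filter fun z => R x z).card : ℝ) = k)
    (hl : ∀ x y, x ≠ y → ((univ.filter fun z => R x z ∧ R y z).card : ℝ) = l) (b : ℝ) :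
    ∑ z, ((b - (T.filter fun x => R x z).card) * (b - (T.filter fun x => R x z).card + 1)) =
      Fintype.card V * (b * (b + 1)) - 2 * b * (T.card * k) + T.card * (T.card - 1) * l := by
  have hd : ∀ z, ((T.filter fun x => R x z).card : ℝ) = ∑ x ∈ T, if R x z then 1 else 0 := by
    intro z; simp
  have h1 : ∑ z, ((T.filter fun x => R x z).card : ℝ) = T.card * k := by
    simp_rw [hd]
    rw [sum_comm]
    have : ∀ x ∈ T, (∑ z, if R x z then (1 : ℝ) else 0) = k := by
      intro x _; rw [← hk x]; simp
    rw [sum_congr rfl this]; simp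
  have h2 : ∑ z, ((T.filter fun x => R x z).card : ℝ) ^ 2 =
      T.card * k + T.card * (T.card - 1) * l := by
    simp_rw [hd, sq, sum_mul_sum]
    rw [sum_comm]
    have : ∀ x ∈ T, (∑ z, ∑ y ∈ T, (if R x z then (1 : ℝ) else 0) * (if R y z then 1 else 0))
        = k + (T.card - 1) * l := by
      intro x hx
      rw [sum_comm]
      have h3 : ∀ y ∈ T, (∑ z, (if R x z then (1 : ℝ) else 0) * (if R y z then 1 else 0)) =
          l + if y = x then k - l else 0 := by
        intro y _
        have h4 : (∑ z, (if R x z then (1 : ℝ) else 0) * (if R y z then 1 else 0)) =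
            ((univ.filter fun z => R x z ∧ R y z).card : ℝ) := by
          rw [card_filter]; push_cast
          apply sum_congr rfl
          intro z _
          by_cases h5 : R x z <;> by_cases h6 : R y z <;> simp [h5, h6]
        rw [h4]
        by_cases h : y = x
        · subst h; simp only [and_self, if_true]; rw [hk]; ring
        · rw [hl x y (Ne.symm h)]; simp [h]
      rw [sum_congr rfl h3, sum_add_distrib]
      simp [hx]; ring
    rw [sum_congr rfl this]; simp; ring
  have h3 : ∀ z, ((b - (T.filter fun x => R x z).card) * (b - (T.filter fun x => R x z).card + 1)) =
      b * (b + 1) - (2 * b + 1) * ((T.filter fun x => R x z).card : ℝ)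
        + ((T.filter fun x => R x z).card : ℝ) ^ 2 := by intro z; ring
  simp_rw [h3]
  rw [sum_add_distrib, sum_sub_distrib, ← mul_sum, ← mul_sum, h1, h2]
  simp; ring

/-- If a doubly regular tournament on `v = 4m-1` vertices contains a transitive
subtournament of size `s`, then `C(b, s) ≥ 0` for every integer `b`. -/
theorem adjacency_polynomial_nonneg
    {m s : ℕ} (hm : 1 ≤ m)
    (A : Matrix (Fin (4 * m - 1)) (Fin (4 * m - 1)) ℂ) (hA : IsDRT A)
    (T : Finset (Fin (4 * m - 1))) (hT : IsTransSubtournament A T) (hTcard : T.card = s) :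
    ∀ b : ℤ, 0 ≤ adjPoly m (b : ℝ) (s : ℝ) := by
  classical
  intro b
  obtain ⟨⟨⟨-, hd0⟩, -⟩, -, hk, hl⟩ := hA
  obtain ⟨ht1, ht2⟩ := hT
  have e1 : (4 * m - 1 - 1) / 2 = 2 * m - 1 := by omega
  have e2 : (4 * m - 1 - 3) / 4 = m - 1 := by omega
  have H := aux_main_s15 (fun x y => A x y = 1) T (2 * m - 1) (m - 1)
    (by
      intro x
      have h := hk x
      rw [e1] at h
      have h' : (univ.filter fun z => A x z = 1).card + 1 = 2 * m := by
        rw [h]; omega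
      have h'' : ((univ.filter fun z => A x z = 1).card : ℝ) + 1 = 2 * m := by exact_mod_cast h'
      have := eq_sub_of_add_eq h''
      convert this)
    (by
      intro x y hxy
      have h := hl x y hxy
      rw [e2] at h
      have h' : (univ.filter fun z => A x z = 1 ∧ A y z = 1).card + 1 = m := by
        rw [h]; omega
      have h'' : ((univ.filter fun z => A x z = 1 ∧ A y z = 1).card : ℝ) + 1 = m := by
        exact_mod_cast h'
      have := eq_sub_of_add_eq h''
      convert this) (b : ℝ)
  have H2 := aux_trans (fun x y => A x y = 1) T (by intro x; simp [hd0])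
    (fun x hx y hy h => Xor.or (ht1 x hx y hy h)) ht2 (fun i => ((b : ℝ) - i) * (b - i + 1))
  rw [aux_range, hTcard] at H2
  rw [hTcard, ← sum_add_sum_compl T, H2] at H
  have hv : ((Fintype.card (Fin (4 * m - 1)) : ℕ) : ℝ) = 4 * m - 1 := by
    rw [Fintype.card_fin, Nat.cast_sub (by omega)]; push_cast; ring
  rw [hv] at H
  have hnn : ∀ n : ℤ, (0 : ℝ) ≤ n * (n + 1) := by
    intro n
    have : 0 ≤ n * (n + 1) := by
      rcases le_or_gt 0 n with h | h
      · positivity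
      · nlinarith
    exact_mod_cast this
  have hpos := sum_nonneg (s := Tᶜ) (fun z _ => by
    have := hnn (b - ((T.filter fun x => A x z = 1).card : ℤ))
    push_cast at this
    exact this)
  rw [adjPoly]
  linarith
end

section
/- Let G be a doubly regular tournament on v = 4m−1 vertices (m ≥ 1) containing a transitive subtournament of size s. Then s ≤ −1 + ⌊√(1+12m)⌋. -/
open Matrix Finset

theorem aux_sum_s16 (n : ℕ) (c : ℤ) :
    3 * ∑ i ∈ range n, (c - 2 * (i : ℤ)) ^ 2 =
      3 * n * c ^ 2 - 6 * c * (n * (n - 1)) + 2 * (n * (n - 1) * (2 * n - 1)) := by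
  induction n with
  | zero => simp
  | succ k ih =>
    rw [Finset.sum_range_succ, mul_add, ih]
    push_cast
    ring

theorem aux_key {V : Type*} [Fintype V] [DecidableEq V] (m : ℤ) (a : V → V → ℤ)
    (h01 : ∀ x y, a x y = 0 ∨ a x y = 1) (hd : ∀ x, a x x = 0)
    (ht : ∀ x y, a x y + a y x = 1 - if x = y then 1 else 0)
    (hv : (Fintype.card V : ℤ) = 4 * m - 1)
    (hr : ∀ x, ∑ y, a x y = 2 * m - 1)
    (hc : ∀ x y, x ≠ y → ∑ z, a x z * a y z = m - 1)
    (T : Finset V) (htr : ∀ x ∈ T, ∀ y ∈ T, ∀ z ∈ T, a x y = 1 → a y z = 1 → a x z = 1) :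
    (T.card : ℤ) * (T.card ^ 2 + 3 * T.card + 2) ≤ T.card * (12 * m) := by
  set S : V → V → ℤ := fun x y => 2 * a x y - 1 + if x = y then 1 else 0 with hS
  have hskew : ∀ x y, S x y = - S y x := by
    intro x y
    have := ht x y
    by_cases h : x = y
    · subst h; simp [hS, hd]
    · have h' : y ≠ x := fun e => h e.symm
      simp only [hS, h, h', if_false] at this ⊢
      linarith
  have hprod : ∀ x y, ∑ z, S x z * S y z = (if x = y then 4 * m - 1 else 0) - 1 := by
    intro x y
    have e : ∀ z, S x z * S y z = 4 * (a x z * a y z) - 2 * a x z - 2 * a y z + 1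
        + (if x = z then (2 * a y z - 1 + if y = z then 1 else 0) else 0) + (if y = z then (2 * a x z - 1) else 0) := by
      intro z
      simp only [hS]
      split_ifs <;> ring
    simp only [e, Finset.sum_add_distrib, Finset.sum_sub_distrib, ← Finset.mul_sum, hr,
      Finset.sum_ite_eq, Finset.mem_univ, if_true, Finset.sum_const, Finset.card_univ, nsmul_eq_mul, hv]
    by_cases h : x = y
    · subst h
      have : ∀ z, a x z * a x z = a x z := by
        intro z; rcases h01 x z with h | h <;> simp [h]
      simp only [this, hr, hd]
      simp
      ring
    · have h' : y ≠ x := fun e => h e.symm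
      have := ht x y
      rw [hc x y h]
      simp only [h, h', if_false] at this ⊢
      linarith
  have htot : ∑ x, (∑ t ∈ T, S t x) ^ 2 = T.card * (4 * m - 1) - T.card ^ 2 := by
    simp only [sq, Finset.sum_mul_sum]
    rw [Finset.sum_comm]
    have : ∀ t ∈ T, ∑ x, ∑ t' ∈ T, S t x * S t' x = 4 * m - 1 - T.card := by
      intro t htT
      rw [Finset.sum_comm]
      have e : ∀ t', ∑ x, S t x * S t' x = (if t = t' then 4 * m - 1 else 0) - 1 := by
        intro t'
        exact hprod t t'
      simp [e, htT, Finset.sum_sub_distrib]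
    rw [Finset.sum_congr rfl this]
    simp
    ring
  let d : V → ℕ := fun x => (T.filter fun y => a x y = 1).card
  have hfd : ∀ x ∈ T, ∑ t ∈ T, S t x = (T.card - 1 : ℤ) - 2 * (d x : ℤ) := by
    intro x hx
    have e1 : ∑ t ∈ T, a x t = d x := by
      simp only [d, Finset.card_filter]
      push_cast
      apply Finset.sum_congr rfl
      intro t _
      rcases h01 x t with h | h <;> simp [h]
    rw [Finset.sum_congr rfl (fun t _ => hskew t x)]
    simp only [hS, Finset.sum_neg_distrib, Finset.sum_add_distrib, Finset.sum_sub_distrib, ← Finset.mul_sum, e1]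
    simp [hx]
    ring
  have hlt : ∀ x ∈ T, ∀ y ∈ T, a x y = 1 → d y < d x := by
    intro x hx y hy hxy
    apply Finset.card_lt_card
    rw [Finset.ssubset_iff_of_subset]
    · exact ⟨y, by simp [hy, hxy], by simp [hd]⟩
    · intro z hz
      simp only [Finset.mem_filter] at hz ⊢
      exact ⟨hz.1, htr x hx y hy z hz.1 hxy hz.2⟩
  have hinj : Set.InjOn d T := by
    intro x hx y hy hxy
    by_contra hne
    have h1 := ht x y
    rw [if_neg hne] at h1
    rcases h01 x y with h | h
    · have := hlt y hy x hx (by linarith)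
      omega
    · have := hlt x hx y hy h
      omega
  have himg : T.image d = range T.card := by
    apply Finset.eq_of_subset_of_card_le
    · intro i hi
      obtain ⟨x, hx, rfl⟩ := Finset.mem_image.1 hi
      rw [Finset.mem_range]
      apply Finset.card_lt_card
      rw [Finset.ssubset_iff_of_subset (Finset.filter_subset _ _)]
      exact ⟨x, hx, by simp [hd]⟩
    · rw [Finset.card_image_of_injOn hinj, Finset.card_range]
  have hin : ∑ x ∈ T, (∑ t ∈ T, S t x) ^ 2
      = ∑ i ∈ range T.card, ((T.card - 1 : ℤ) - 2 * (i : ℤ)) ^ 2 := by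
    rw [← himg, Finset.sum_image hinj]
    exact Finset.sum_congr rfl (fun x hx => by rw [hfd x hx])
  have hle : ∑ x ∈ T, (∑ t ∈ T, S t x) ^ 2 ≤ ∑ x, (∑ t ∈ T, S t x) ^ 2 :=
    Finset.sum_le_sum_of_subset_of_nonneg (Finset.subset_univ _) (fun _ _ _ => sq_nonneg _)
  have h3 := aux_sum_s16 T.card (T.card - 1)
  rw [hin, htot] at hle
  nlinarith [h3, hle]

/-- If a doubly regular tournament on `v = 4m-1` vertices contains a transitive
subtournament of size `s`, then `s ≤ -1 + ⌊√(1+12m)⌋`. -/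
theorem drt_bound_floor_sqrt
    {m s : ℕ} (hm : 1 ≤ m)
    (A : Matrix (Fin (4 * m - 1)) (Fin (4 * m - 1)) ℂ) (hA : IsDRT A)
    (T : Finset (Fin (4 * m - 1))) (hT : IsTransSubtournament A T) (hTcard : T.card = s) :
    (s : ℝ) ≤ -1 + (⌊Real.sqrt (1 + 12 * (m : ℝ))⌋ : ℝ) := by
  classical
  obtain ⟨⟨⟨h01, hd⟩, ht⟩, -, hr, hc⟩ := hA
  have key := aux_key (m : ℤ) (fun x y => if A x y = 1 then (1 : ℤ) else 0)
    (by intro x y; by_cases h : A x y = 1 <;> simp [h]) (by intro x; simp [hd])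
    (by
      intro x y
      have h := congrFun (congrFun ht x) y
      simp only [Matrix.add_apply, Matrix.transpose_apply, Matrix.sub_apply, Matrix.of_apply,
        Matrix.one_apply] at h
      by_cases hxy : x = y
      · subst hxy; simp [hd]
      · rw [if_neg hxy] at h
        rcases h01 x y with h1 | h1 <;> rcases h01 y x with h2 | h2 <;>
          simp [h1, h2, hxy] at h ⊢)
    (by simp; omega)
    (by
      intro x
      have := hr x
      rw [Finset.sum_boole]
      omega)
    (by
      intro x y hxy
      have := hc x y hxy
      have e : ∀ z, (if A x z = 1 then (1 : ℤ) else 0) * (if A y z = 1 then (1 : ℤ) else 0)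
          = if (A x z = 1 ∧ A y z = 1) then 1 else 0 := by
        intro z
        by_cases h1 : A x z = 1 <;> by_cases h2 : A y z = 1 <;> simp [h1, h2]
      simp only [e]
      rw [Finset.sum_boole]
      omega)
    T
    (by
      intro x hx y hy z hz h1 h2
      have h1' : A x y = 1 := by by_contra h; simp [h] at h1
      have h2' : A y z = 1 := by by_contra h; simp [h] at h2
      simp [hT.2 x hx y hy z hz h1' h2'])
  rw [hTcard] at key
  have hs : ((s : ℤ) + 1) ^ 2 ≤ 1 + 12 * m := by
    rcases Nat.eq_zero_or_pos s with h | h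
    · subst h; push_cast; omega
    · have hp : (0 : ℤ) < s := by exact_mod_cast h
      have := le_of_mul_le_mul_left key hp
      nlinarith
  have hs' : ((s : ℝ) + 1) ^ 2 ≤ 1 + 12 * m := by exact_mod_cast hs
  have h1 : (((s : ℤ) + 1 : ℤ) : ℝ) ≤ Real.sqrt (1 + 12 * (m : ℝ)) := by
    push_cast
    exact Real.le_sqrt_of_sq_le hs'
  have h2 := Int.le_floor.2 h1
  have h3 : (((s : ℤ) + 1 : ℤ) : ℝ) ≤ (⌊Real.sqrt (1 + 12 * (m : ℝ))⌋ : ℝ) := by exact_mod_cast h2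
  push_cast at h3
  linarith
end

section
/- Let G be a doubly regular tournament on v = 4m−1 vertices (m ≥ 1) containing a transitive subtournament of size s, and let ε = √(1+12m) − ⌊√(1+12m)⌋. If ε ≠ 0 and −1 + ⌊√(1+12m)⌋ is odd, then s ≤ −2 + ⌊√(1+12m)⌋. -/
open Matrix Finset

lemma aux_sum1 (s : ℕ) : 2 * ∑ i ∈ range s, (i : ℤ) = s * (s - 1) := by
  induction s with
  | zero => simp
  | succ n ih => rw [sum_range_succ, mul_add, ih]; push_cast; ring

lemma aux_sum2 (s : ℕ) : 6 * ∑ i ∈ range s, (i : ℤ) ^ 2 = s * (s - 1) * (2 * s - 1) := by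
  induction s with
  | zero => simp
  | succ n ih => rw [sum_range_succ, mul_add, ih]; push_cast; ring

lemma aux_key_s18 {m : ℕ} (hm : 1 ≤ m)
    (A : Matrix (Fin (4 * m - 1)) (Fin (4 * m - 1)) ℂ) (hA : IsDRT A)
    (T : Finset (Fin (4 * m - 1))) (hT : IsTransSubtournament A T) :
    ∃ c : Fin (4 * m - 1) → ℕ,
      3 * ∑ z ∈ Tᶜ, (2 * (c z : ℤ) - T.card) ^ 2
        = (T.card : ℤ) * (12 * m - (T.card + 1) * (T.card + 2)) := by
  classical
  obtain ⟨⟨⟨h01, hd⟩, hsum⟩, -, hreg, hpair⟩ := hA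
  obtain ⟨hx, htr⟩ := hT
  set B : Fin (4 * m - 1) → Fin (4 * m - 1) → ℤ := fun x z => if A x z = 1 then 1 else 0 with hB
  let c : Fin (4 * m - 1) → ℕ := fun z => (T.filter fun x => A x z = 1).card
  have hc : ∀ z, (c z : ℤ) = ∑ x ∈ T, B x z := by
    intro z; simp [c, hB]
  have hrow : ∀ x, ∑ z, B x z = 2 * m - 1 := by
    intro x
    have := hreg x
    have h2 : ∑ z, B x z = ((univ.filter fun y => A x y = 1).card : ℤ) := by simp [hB]
    rw [h2, this]; omega
  have hpr : ∀ x y, ∑ z, B x z * B y z = (if x = y then (m : ℤ) else 0) + (m - 1) := by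
    intro x y
    split_ifs with h
    · subst h
      have : ∀ z, B x z * B x z = B x z := by intro z; simp only [hB]; split_ifs <;> simp
      simp only [this, hrow]; ring
    · have := hpair x y h
      have h2 : ∑ z, B x z * B y z
          = ((univ.filter fun z => A x z = 1 ∧ A y z = 1).card : ℤ) := by
        rw [Finset.card_filter]; push_cast
        refine sum_congr rfl fun z _ => ?_
        simp only [hB]
        by_cases h1 : A x z = 1 <;> by_cases h2 : A y z = 1 <;> simp [h1, h2]
      rw [h2, this]; omega
  have S1 : ∑ z, (c z : ℤ) = T.card * (2 * m - 1) := by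
    simp only [hc]; rw [sum_comm]; simp only [hrow]; simp; ring
  have S2 : ∑ z, (c z : ℤ) ^ 2 = T.card * m + T.card * T.card * (m - 1) := by
    simp only [hc, sq, sum_mul_sum]
    rw [sum_comm]
    have : ∀ x ∈ T, ∑ z, ∑ y ∈ T, B x z * B y z = m + T.card * (m - 1) := by
      intro x hxT
      rw [sum_comm]; simp only [hpr, sum_add_distrib]
      simp [hxT]; ring
    rw [sum_congr rfl this]; simp; ring
  have hlt : ∀ x ∈ T, ∀ y ∈ T, A x y = 1 → c x < c y := by
    intro x hxT y hyT hxy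
    apply card_lt_card
    rw [Finset.ssubset_iff_of_subset]
    · exact ⟨x, by simp [hxT, hxy], by simp [hd]⟩
    · intro w hw
      simp only [mem_filter] at hw ⊢
      exact ⟨hw.1, htr w hw.1 x hxT y hyT hw.2 hxy⟩
  have hinj : Set.InjOn c T := by
    intro x hxT y hyT he
    by_contra hne
    rcases hx x hxT y hyT hne with h | h
    · exact absurd he (hlt x hxT y hyT h.1).ne
    · exact absurd he (hlt y hyT x hxT h.1).ne'
  have himg : T.image c = range T.card := by
    apply eq_of_subset_of_card_le
    · intro i hi
      obtain ⟨z, hz, rfl⟩ := mem_image.1 hi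
      rw [mem_range]
      apply card_lt_card
      rw [Finset.ssubset_iff_of_subset (filter_subset _ _)]
      exact ⟨z, hz, by simp [hd]⟩
    · rw [card_image_of_injOn hinj, card_range]
  have T1 : ∑ z ∈ T, (c z : ℤ) = ∑ i ∈ range T.card, (i : ℤ) := by
    rw [← himg, sum_image hinj]
  have T2 : ∑ z ∈ T, (c z : ℤ) ^ 2 = ∑ i ∈ range T.card, (i : ℤ) ^ 2 := by
    rw [← himg, sum_image hinj]
  have a1 := aux_sum1 T.card
  have a2 := aux_sum2 T.card
  rw [← T1] at a1
  rw [← T2] at a2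
  have b1 := sum_add_sum_compl T (fun z => (c z : ℤ))
  have b2 := sum_add_sum_compl T (fun z => (c z : ℤ) ^ 2)
  rw [S1] at b1
  rw [S2] at b2
  have hcc : ((Tᶜ).card : ℤ) = 4 * m - 1 - T.card := by
    have h1 := card_add_card_compl T
    rw [Fintype.card_fin] at h1
    omega
  refine ⟨c, ?_⟩
  have e : ∑ z ∈ Tᶜ, (2 * (c z : ℤ) - T.card) ^ 2
      = 4 * ∑ z ∈ Tᶜ, (c z : ℤ) ^ 2 - 4 * T.card * ∑ z ∈ Tᶜ, (c z : ℤ)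
        + (T.card : ℤ) ^ 2 * (4 * m - 1 - T.card) := by
    rw [← hcc, mul_sum, mul_sum, ← sum_sub_distrib]
    rw [show (T.card : ℤ) ^ 2 * (Tᶜ.card : ℤ) = ∑ z ∈ Tᶜ, (T.card : ℤ) ^ 2 by simp; ring]
    rw [← sum_add_distrib]
    exact sum_congr rfl fun z _ => by ring
  rw [e]
  linear_combination 12 * b2 - 12 * T.card * b1 - 2 * a2 + 6 * T.card * a1

/-- If a doubly regular tournament on `v = 4m-1` vertices contains a transitive
subtournament of size `s`, `√(1+12m)` is not an integer and `-1 + ⌊√(1+12m)⌋` is odd,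
then `s ≤ -2 + ⌊√(1+12m)⌋`. -/
theorem drt_bound_odd_case
    {m s : ℕ} (hm : 1 ≤ m)
    (A : Matrix (Fin (4 * m - 1)) (Fin (4 * m - 1)) ℂ) (hA : IsDRT A)
    (T : Finset (Fin (4 * m - 1))) (hT : IsTransSubtournament A T) (hTcard : T.card = s)
    (heps : Real.sqrt (1 + 12 * (m : ℝ)) - (⌊Real.sqrt (1 + 12 * (m : ℝ))⌋ : ℝ) ≠ 0)
    (hodd : Odd (-1 + ⌊Real.sqrt (1 + 12 * (m : ℝ))⌋)) :
    (s : ℝ) ≤ -2 + (⌊Real.sqrt (1 + 12 * (m : ℝ))⌋ : ℝ) := by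
  obtain ⟨c, hc⟩ := aux_key_s18 hm A hA T hT
  have hfl : ∀ k : ℤ, 0 ≤ k → k ^ 2 ≤ 1 + 12 * m → k ≤ ⌊Real.sqrt (1 + 12 * (m : ℝ))⌋ := by
    intro k hk h
    rw [Int.le_floor]
    apply Real.le_sqrt_of_sq_le
    exact_mod_cast h
  have hcc : ((Tᶜ).card : ℤ) = 4 * m - 1 - T.card := by
    have h1 := card_add_card_compl T
    rw [Fintype.card_fin] at h1
    omega
  rw [hTcard] at hc hcc
  have hm' : (1 : ℤ) ≤ m := by exact_mod_cast hm
  generalize ⌊Real.sqrt (1 + 12 * (m : ℝ))⌋ = f at *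
  suffices h : (s : ℤ) + 2 ≤ f by
    have : ((s : ℝ)) + 2 ≤ f := by exact_mod_cast h
    linarith
  have f3 := hfl 3 (by norm_num) (by linarith)
  rcases Nat.even_or_odd s with hs | hs
  · rcases Nat.eq_zero_or_pos s with h0 | h0
    · subst h0; push_cast; linarith
    have hnn : (0 : ℤ) ≤ ∑ z ∈ Tᶜ, (2 * (c z : ℤ) - s) ^ 2 := sum_nonneg fun _ _ => sq_nonneg _
    have hp : (0 : ℤ) < s := by exact_mod_cast h0
    have h2 : (0 : ℤ) ≤ 12 * m - (s + 1) * (s + 2) := by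
      by_contra hneg
      push Not at hneg
      have := mul_neg_of_pos_of_neg hp hneg
      linarith
    have h3 := hfl (s + 1) (by linarith) (by nlinarith)
    obtain ⟨a, ha⟩ := hodd
    obtain ⟨b, hb⟩ := hs
    omega
  · have hge : ((Tᶜ).card : ℤ) ≤ ∑ z ∈ Tᶜ, (2 * (c z : ℤ) - s) ^ 2 := by
      rw [card_eq_sum_ones]; push_cast
      refine sum_le_sum fun z _ => ?_
      have : 2 * (c z : ℤ) - s ≠ 0 := by
        obtain ⟨b, hb⟩ := hs
        omega
      have := sq_pos_of_ne_zero this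
      linarith
    rw [hcc] at hge
    apply hfl _ (by positivity)
    have h1 : 1 ≤ s := hs.pos
    rcases h1.eq_or_lt with h | h
    · rw [← h]; push_cast; linarith
    · have hp : (0 : ℤ) < s - 1 := by
        have : (1 : ℤ) < s := by exact_mod_cast h
        linarith
      by_contra hneg
      push Not at hneg
      have := mul_pos hp (sub_pos.2 hneg)
      nlinarith
end
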